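/- arXiv:2401.00837 — 2 statements merged into one kernel-verified Lean document; each statement's English description precedes it below -/
import Mathlib

section
/- Let S ⊆ {-1,0,1}^d \ {0} be a step set (with positive weights) that is symmetric over every coordinate axis and moves forwards and backwards in each coordinate. Then the total weight s_n of walks of length n taking steps in S, beginning at the origin, and never leaving ℕ^d satisfies s_n = S(1)^n · n^{-d/2} · [ (S(1)/π)^{d/2} · (b_1 ··· b_d)^{-1/2} + O(1/n) ] as n → ∞. -/
open Finset Filter
open scoped Classical

noncomputable section

/-- Total weight of walks of length `n` with steps in `S` (weighted by `w`),
starting at the origin and never leaving `ℕ^d`. -/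
def walkWeight (d : ℕ) (S : Finset (Fin d → ℤ)) (w : (Fin d → ℤ) → ℝ) (n : ℕ) : ℝ :=
  ∑ f : Fin n → {i // i ∈ S},
    if ∀ m : ℕ, m ≤ n → ∀ j : Fin d,
        0 ≤ ∑ k ∈ Finset.univ.filter (fun k : Fin n => (k : ℕ) < m), ((f k : Fin d → ℤ) j)
    then ∏ k : Fin n, w (f k) else 0

/-- The step set `S` (with weights `w`) is symmetric over the `k`-th coordinate axis. -/
def SymmetricAxis (d : ℕ) (S : Finset (Fin d → ℤ)) (w : (Fin d → ℤ) → ℝ) (k : Fin d) : Prop :=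
  ∀ i ∈ S, Function.update i k (-(i k)) ∈ S ∧ w (Function.update i k (-(i k))) = w i
def hsWalk (d : ℕ) (S : Finset (Fin d → ℤ)) (w : (Fin d → ℤ) → ℝ) :
    ℕ → (Fin d → ℤ) → ℝ
  | 0, x => if ∀ j, 0 ≤ x j then 1 else 0
  | n + 1, x => if ∀ j, 0 ≤ x j then ∑ i ∈ S, w i * hsWalk d S w n (fun j => x j + i j) else 0

def hsAvg (d : ℕ) (S : Finset (Fin d → ℤ)) (w : (Fin d → ℤ) → ℝ) :
    ℕ → ((Fin d → ℕ) → ℝ) → ℝ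
  | 0, φ => φ (fun _ => 0)
  | n + 1, φ => ∑ i ∈ S, w i * hsAvg d S w n (fun N => φ (fun j => N j + (i j).natAbs))

def hsP : ℕ → ℤ → ℝ
  | 0, x => if 0 ≤ x then 1 else 0
  | m + 1, x => if 0 ≤ x then (hsP m (x + 1) + hsP m (x - 1)) / 2 else 0

lemma hsP_neg (m : ℕ) (x : ℤ) (hx : x < 0) : hsP m x = 0 := by
  cases m <;> simp [hsP, not_le.mpr hx]

lemma hs_walk_eq (d : ℕ) (S : Finset (Fin d → ℤ)) (w : (Fin d → ℤ) → ℝ) (n : ℕ) :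
    ∀ x : Fin d → ℤ, (∑ f : Fin n → {i // i ∈ S},
    if ∀ m : ℕ, m ≤ n → ∀ j : Fin d,
        0 ≤ x j + ∑ k ∈ Finset.univ.filter (fun k : Fin n => (k : ℕ) < m), ((f k : Fin d → ℤ) j)
    then ∏ k : Fin n, w (f k) else 0) = hsWalk d S w n x := by
  induction n with
  | zero => intro x; simp [hsWalk]
  | succ n ih =>
    intro x
    rw [hsWalk]
    rw [← (Fin.consEquiv (fun _ : Fin (n+1) => {i // i ∈ S})).sum_comp, Fintype.sum_prod_type]
    have key : ∀ (a : {i // i ∈ S}) (f : Fin n → {i // i ∈ S}),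
      (∀ m : ℕ, m ≤ n + 1 → ∀ j : Fin d, 0 ≤ x j + ∑ k ∈ Finset.univ.filter (fun k : Fin (n+1) => (k : ℕ) < m), (((Fin.cons a f : Fin (n+1) → {i // i ∈ S}) k : Fin d → ℤ) j)) ↔
      ((∀ j, 0 ≤ x j) ∧ ∀ m : ℕ, m ≤ n → ∀ j : Fin d,
        0 ≤ (x j + (a : Fin d → ℤ) j) + ∑ k ∈ Finset.univ.filter (fun k : Fin n => (k : ℕ) < m), ((f k : Fin d → ℤ) j)) := by
      intro a f
      have hs : ∀ m j, ∑ k ∈ Finset.univ.filter (fun k : Fin (n+1) => (k : ℕ) < m + 1), (((Fin.cons a f : Fin (n+1) → {i // i ∈ S}) k : Fin d → ℤ) j) = (a : Fin d → ℤ) j + ∑ k ∈ Finset.univ.filter (fun k : Fin n => (k : ℕ) < m), ((f k : Fin d → ℤ) j) := by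
        intro m j
        rw [Finset.sum_filter, Fin.sum_univ_succ, Finset.sum_filter]
        simp
      constructor
      · intro h
        refine ⟨fun j => by simpa using h 0 (by omega) j, fun m hm j => ?_⟩
        have := h (m+1) (by omega) j
        rw [hs] at this
        linarith
      · rintro ⟨h1, h2⟩ m hm j
        cases m with
        | zero => simpa using h1 j
        | succ m =>
          rw [hs]
          have := h2 m (by omega) j
          linarith
    split_ifs with hx
    · rw [← Finset.sum_coe_sort S]
      refine Finset.sum_congr rfl fun a _ => ?_
      rw [← ih, Finset.mul_sum]
      refine Finset.sum_congr rfl fun f _ => ?_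
      simp only [Fin.consEquiv_apply]
      rw [mul_ite, mul_zero, Fin.prod_univ_succ]
      have := key a f
      simp only [hx, implies_true, true_and] at this
      simp only [this, Fin.cons_zero, Fin.cons_succ]
    · refine Finset.sum_eq_zero fun a _ => Finset.sum_eq_zero fun f _ => ?_
      simp only [Fin.consEquiv_apply]
      rw [if_neg]
      rw [key]; exact fun h => hx h.1

section
variable {d : ℕ} {S : Finset (Fin d → ℤ)} {w : (Fin d → ℤ) → ℝ}

lemma hsAvg_add (n : ℕ) : ∀ φ ψ : (Fin d → ℕ) → ℝ,
    hsAvg d S w n (fun N => φ N + ψ N) = hsAvg d S w n φ + hsAvg d S w n ψ := by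
  induction n with
  | zero => intro φ ψ; simp [hsAvg]
  | succ n ih =>
    intro φ ψ
    simp only [hsAvg]
    rw [← Finset.sum_add_distrib]
    refine Finset.sum_congr rfl fun i _ => ?_
    rw [← mul_add, ← ih]

lemma hsAvg_smul (n : ℕ) (c : ℝ) : ∀ φ : (Fin d → ℕ) → ℝ,
    hsAvg d S w n (fun N => c * φ N) = c * hsAvg d S w n φ := by
  induction n with
  | zero => intro φ; simp [hsAvg]
  | succ n ih =>
    intro φ
    simp only [hsAvg]
    rw [Finset.mul_sum]
    refine Finset.sum_congr rfl fun i _ => ?_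
    rw [ih]; ring

lemma hsAvg_zero (n : ℕ) : hsAvg d S w n (fun _ => 0) = 0 := by
  have := hsAvg_smul (S := S) (w := w) n 0 (fun _ => 0)
  simpa using this

lemma hsAvg_sum {ι : Type*} (n : ℕ) (A : Finset ι) (φ : ι → (Fin d → ℕ) → ℝ) :
    hsAvg d S w n (fun N => ∑ a ∈ A, φ a N) = ∑ a ∈ A, hsAvg d S w n (φ a) := by
  induction A using Finset.induction_on with
  | empty => simp [hsAvg_zero]
  | insert a A ha ih =>
    simp only [Finset.sum_insert ha]
    rw [hsAvg_add, ih]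

lemma hsAvg_mono (hstep : ∀ i ∈ S, (∀ j, i j = -1 ∨ i j = 0 ∨ i j = 1) ∧ i ≠ 0)
    (hw : ∀ i ∈ S, 0 < w i) (n : ℕ) : ∀ φ ψ : (Fin d → ℕ) → ℝ,
    (∀ N, (∀ k, N k ≤ n) → φ N ≤ ψ N) → hsAvg d S w n φ ≤ hsAvg d S w n ψ := by
  induction n with
  | zero => intro φ ψ h; simp only [hsAvg]; exact h _ (by simp)
  | succ n ih =>
    intro φ ψ h
    simp only [hsAvg]
    refine Finset.sum_le_sum fun i hi => mul_le_mul_of_nonneg_left (ih _ _ fun N hN => h _ fun k => ?_) (hw i hi).le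
    have := (hstep i hi).1 k
    have := hN k
    omega

lemma hs_sym_one (k : Fin d) (hsym : SymmetricAxis d S w k) (g : Fin d → ℤ → ℝ) :
    ∑ i ∈ S, w i * ∏ j, g j (i j) =
    ∑ i ∈ S, w i * ∏ j, (Function.update g k (fun t => (g k t + g k (-t)) / 2)) j (i j) := by
  have h1 : ∑ i ∈ S, w i * ∏ j, g j (i j) =
      ∑ i ∈ S, w i * ∏ j, g j (Function.update i k (-(i k)) j) := by
    refine Finset.sum_nbij' (fun i => Function.update i k (-(i k))) (fun i => Function.update i k (-(i k))) ?_ ?_ ?_ ?_ ?_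
    · intro i hi; exact (hsym i hi).1
    · intro i hi; exact (hsym i hi).1
    · intro i hi; simp
    · intro i hi; simp
    · intro i hi
      simp only [Function.update_self, neg_neg, Function.update_idem, Function.update_eq_self]
      rw [(hsym i hi).2]
  have h2 : ∑ i ∈ S, w i * ∏ j, g j (i j) = (∑ i ∈ S, w i * ∏ j, g j (i j) + ∑ i ∈ S, w i * ∏ j, g j (Function.update i k (-(i k)) j)) / 2 := by
    rw [← h1]; ring
  rw [h2, ← Finset.sum_add_distrib, Finset.sum_div]
  refine Finset.sum_congr rfl fun i _ => ?_
  have e : ∀ F : Fin d → ℝ, ∏ j, F j = F k * ∏ j ∈ Finset.univ.erase k, F j := fun F =>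
    (Finset.mul_prod_erase _ _ (Finset.mem_univ k)).symm
  rw [e, e, e]
  have e2 : ∏ j ∈ Finset.univ.erase k, g j (Function.update i k (-(i k)) j) = ∏ j ∈ Finset.univ.erase k, g j (i j) :=
    Finset.prod_congr rfl fun j hj => by rw [Function.update_of_ne (Finset.ne_of_mem_erase hj)]
  have e3 : ∏ j ∈ Finset.univ.erase k, (Function.update g k (fun t => (g k t + g k (-t)) / 2)) j (i j) = ∏ j ∈ Finset.univ.erase k, g j (i j) :=
    Finset.prod_congr rfl fun j hj => by rw [Function.update_of_ne (Finset.ne_of_mem_erase hj)]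
  rw [e2, e3]
  simp only [Function.update_self]
  ring

lemma hs_sym_all (hsym : ∀ k : Fin d, SymmetricAxis d S w k) (g : Fin d → ℤ → ℝ) :
    ∑ i ∈ S, w i * ∏ j, g j (i j) =
    ∑ i ∈ S, w i * ∏ j, ((g j (i j) + g j (-(i j))) / 2) := by
  have : ∀ A : Finset (Fin d), ∑ i ∈ S, w i * ∏ j, g j (i j) =
    ∑ i ∈ S, w i * ∏ j, (fun j t => if j ∈ A then ((g j t + g j (-t)) / 2) else g j t) j (i j) := by
    intro A
    induction A using Finset.induction_on with
    | empty => simp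
    | insert a A ha ih =>
      rw [ih]
      refine (hs_sym_one a (hsym a) (fun j t => if j ∈ A then ((g j t + g j (-t)) / 2) else g j t)).trans ?_
      refine Finset.sum_congr rfl fun i _ => ?_
      congr 1
      refine Finset.prod_congr rfl fun j _ => ?_
      by_cases hj : j = a
      · subst hj; simp [ha]
      · simp [hj]
  simpa using this Finset.univ

lemma hs_walk_avg (hstep : ∀ i ∈ S, (∀ j, i j = -1 ∨ i j = 0 ∨ i j = 1) ∧ i ≠ 0)
    (hsym : ∀ k : Fin d, SymmetricAxis d S w k) (n : ℕ) : ∀ x : Fin d → ℤ,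
    hsWalk d S w n x = hsAvg d S w n (fun N => ∏ j, hsP (N j) (x j)) := by
  induction n with
  | zero => intro x; simp [hsWalk, hsAvg, hsP, Finset.prod_ite_zero]
  | succ n ih =>
    intro x
    rw [hsWalk, hsAvg]
    split_ifs with hx
    · simp only [ih]
      simp only [← hsAvg_smul]
      rw [← hsAvg_sum, ← hsAvg_sum]
      congr 1
      funext N
      rw [hs_sym_all hsym (fun j t => hsP (N j) (x j + t))]
      refine Finset.sum_congr rfl fun i hi => ?_
      congr 1
      refine Finset.prod_congr rfl fun j _ => ?_
      rcases (hstep i hi).1 j with h | h | h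
      · simp [h, hsP, hx j]; ring_nf
      · simp [h]
      · simp [h, hsP, hx j]; ring_nf
    · symm
      push Not at hx
      obtain ⟨j, hj⟩ := hx
      refine Finset.sum_eq_zero fun i _ => ?_
      have : (fun N : Fin d → ℕ => ∏ j, hsP (N j + (i j).natAbs) (x j)) = fun _ => 0 := by
        funext N
        exact Finset.prod_eq_zero (Finset.mem_univ j) (hsP_neg _ _ hj)
      rw [this, hsAvg_zero, mul_zero]

lemma hs_main_avg (hstep : ∀ i ∈ S, (∀ j, i j = -1 ∨ i j = 0 ∨ i j = 1) ∧ i ≠ 0)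
    (hsym : ∀ k : Fin d, SymmetricAxis d S w k) (n : ℕ) :
    walkWeight d S w n = hsAvg d S w n (fun N => ∏ j, hsP (N j) 0) := by
  have := hs_walk_eq d S w n (fun _ => 0)
  simp only [zero_add] at this
  rw [walkWeight, this, hs_walk_avg hstep hsym]

/-- moments -/
lemma hsAvg_one (n : ℕ) : hsAvg d S w n (fun _ => 1) = (∑ i ∈ S, w i) ^ n := by
  induction n with
  | zero => simp [hsAvg]
  | succ n ih => simp only [hsAvg, ih]; rw [← Finset.sum_mul]; ring

lemma hsAvg_const (n : ℕ) (c : ℝ) : hsAvg d S w n (fun _ => c) = c * (∑ i ∈ S, w i) ^ n := by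
  have := hsAvg_smul (S := S) (w := w) n c (fun _ => 1)
  rw [hsAvg_one] at this; simpa using this

lemma hsAvg_geom (k : Fin d) (r : ℝ) (n : ℕ) :
    hsAvg d S w n (fun N => r ^ (N k)) = (∑ i ∈ S, w i * r ^ (i k).natAbs) ^ n := by
  induction n with
  | zero => simp [hsAvg]
  | succ n ih =>
    simp only [hsAvg]
    have : ∀ i : Fin d → ℤ, hsAvg d S w n (fun N => r ^ (N k + (i k).natAbs)) = r ^ (i k).natAbs * (∑ i ∈ S, w i * r ^ (i k).natAbs) ^ n := by
      intro i
      rw [← ih, ← hsAvg_smul]; congr 1; funext N; ring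
    simp only [this, ← mul_assoc]
    rw [← Finset.sum_mul]; ring

lemma hs_sum_q (hstep : ∀ i ∈ S, (∀ j, i j = -1 ∨ i j = 0 ∨ i j = 1) ∧ i ≠ 0) (k : Fin d)
    (hsym : SymmetricAxis d S w k) (F : ℕ → ℝ) :
    ∑ i ∈ S, w i * F (i k).natAbs = (∑ i ∈ S, w i) * F 0 +
      2 * (∑ i ∈ S.filter fun i => i k = 1, w i) * (F 1 - F 0) := by
  have h1 : ∑ i ∈ S.filter (fun i => i k = 1), w i = ∑ i ∈ S.filter (fun i => i k = -1), w i := by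
    refine Finset.sum_nbij' (fun i => Function.update i k (-(i k))) (fun i => Function.update i k (-(i k))) ?_ ?_ ?_ ?_ ?_
    · intro i hi; simp only [Finset.mem_filter] at hi ⊢; exact ⟨(hsym i hi.1).1, by simp [hi.2]⟩
    · intro i hi; simp only [Finset.mem_filter] at hi ⊢; exact ⟨(hsym i hi.1).1, by simp [hi.2]⟩
    · intro i hi; simp
    · intro i hi; simp
    · intro i hi; exact (hsym i (Finset.mem_filter.mp hi).1).2.symm
  have h2 : 2 * (∑ i ∈ S.filter fun i => i k = 1, w i) = ∑ i ∈ S.filter (fun i => i k = 1), w i + ∑ i ∈ S.filter (fun i => i k = -1), w i := by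
    rw [← h1]; ring
  rw [h2, Finset.sum_filter, Finset.sum_filter, ← Finset.sum_add_distrib, Finset.sum_mul, Finset.sum_mul, ← Finset.sum_add_distrib]
  refine Finset.sum_congr rfl fun i hi => ?_
  rcases (hstep i hi).1 k with h | h | h
  · simp [h]; ring
  · simp [h]
  · simp [h]; ring

lemma hsAvg_lin (hstep : ∀ i ∈ S, (∀ j, i j = -1 ∨ i j = 0 ∨ i j = 1) ∧ i ≠ 0) (k : Fin d)
    (hsym : SymmetricAxis d S w k) (q : ℝ)
    (hq : (∑ i ∈ S, w i) * q = 2 * ∑ i ∈ S.filter (fun i => i k = 1), w i) (n : ℕ) :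
    ∀ c : ℝ, hsAvg d S w n (fun N => (N k : ℝ) + c) = (n * q + c) * (∑ i ∈ S, w i) ^ n := by
  induction n with
  | zero => intro c; simp [hsAvg]
  | succ n ih =>
    intro c
    simp only [hsAvg]
    push_cast
    simp only [add_assoc, ih]
    have := hs_sum_q hstep k hsym (fun m => (n * q + ((m : ℝ) + c)))
    simp only [← mul_assoc]
    rw [← Finset.sum_mul, this, ← hq]
    push_cast
    ring

lemma hsAvg_sq (hstep : ∀ i ∈ S, (∀ j, i j = -1 ∨ i j = 0 ∨ i j = 1) ∧ i ≠ 0) (k : Fin d)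
    (hsym : SymmetricAxis d S w k) (q : ℝ)
    (hq : (∑ i ∈ S, w i) * q = 2 * ∑ i ∈ S.filter (fun i => i k = 1), w i) (n : ℕ) :
    ∀ c : ℝ, hsAvg d S w n (fun N => ((N k : ℝ) + c) ^ 2) =
      ((n * q + c) ^ 2 + n * (q * (1 - q))) * (∑ i ∈ S, w i) ^ n := by
  induction n with
  | zero => intro c; simp [hsAvg]
  | succ n ih =>
    intro c
    simp only [hsAvg]
    push_cast
    simp only [add_assoc, ih]
    have := hs_sum_q hstep k hsym (fun m => ((n * q + ((m : ℝ) + c))^2 + n * (q * (1 - q))))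
    simp only [← mul_assoc] at this ⊢
    rw [← Finset.sum_mul, this, ← hq]
    push_cast
    ring
end

/-- simple random walk probabilities -/
def hsU : ℕ → ℤ → ℝ
  | 0, y => if y = 0 then 1 else 0
  | m + 1, y => (hsU m (y - 1) + hsU m (y + 1)) / 2

lemma hsP_eq (m : ℕ) : ∀ x : ℕ,
    hsP m ((x : ℤ) - 1) = ∑ t ∈ Finset.range x, (hsU m (t + 1) + hsU m (-t)) := by
  induction m with
  | zero =>
    intro x
    cases x with
    | zero => simp [hsP]
    | succ x =>
      rw [Finset.sum_range_succ']
      have h1 : ∀ t : ℕ, ((t : ℤ) + 1 + 1 = 0) = False := by intro t; simp; omega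
      have h2 : ∀ t : ℕ, (-1 + -(t : ℤ) = 0) = False := by intro t; simp; omega
      simp [hsP, hsU, h1, h2]
  | succ m ih =>
    have key : ∀ x : ℕ, ∑ t ∈ Finset.range (x + 1), (hsU (m+1) (t + 1) + hsU (m+1) (-t)) =
      (∑ t ∈ Finset.range (x+2), (hsU m (t + 1) + hsU m (-t)) + ∑ t ∈ Finset.range x, (hsU m (t + 1) + hsU m (-t))) / 2 := by
      intro x
      induction x with
      | zero => simp [hsU, Finset.sum_range_succ]; ring_nf
      | succ x ihx =>
        rw [Finset.sum_range_succ, ihx, Finset.sum_range_succ _ (x+2), Finset.sum_range_succ _ x]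
        simp only [hsU]
        push_cast
        have e1 : (x : ℤ) + 1 + 1 - 1 = x + 1 := by ring
        have e2 : (x : ℤ) + 1 + 1 + 1 = x + 2 + 1 := by ring
        have e3 : -((x : ℤ) + 1) - 1 = -(x + 2) := by ring
        have e4 : -((x : ℤ) + 1) + 1 = -x := by ring
        rw [e1, e2, e3, e4]
        ring
    intro x
    cases x with
    | zero => simp [hsP]
    | succ x =>
      rw [key, ← ih, ← ih]
      push_cast
      rw [hsP, if_pos (by omega)]
      congr 3
      · ring
      · congr 1; ring

lemma hsU_lt (m : ℕ) : ∀ y : ℤ, y < -m → hsU m y = 0 := by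
  induction m with
  | zero => intro y hy; simp at hy; simp [hsU, hy.ne]
  | succ m ih =>
    intro y hy
    push_cast at hy
    rw [hsU, ih _ (by omega), ih _ (by omega)]; simp

lemma hsU_odd (m : ℕ) : ∀ y : ℤ, (y + m) % 2 = 1 → hsU m y = 0 := by
  induction m with
  | zero =>
    intro y hy
    have : y ≠ 0 := by rintro rfl; simp at hy
    simp [hsU, this]
  | succ m ih =>
    intro y hy
    push_cast at hy
    rw [hsU, ih _ (by omega), ih _ (by omega)]; simp

lemma hsU_choose (m : ℕ) : ∀ a : ℕ, hsU m (2 * a - m) = (m.choose a : ℝ) / 2 ^ m := by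
  induction m with
  | zero =>
    intro a
    cases a with
    | zero => simp [hsU]
    | succ a => 
      have : 2 * ((a : ℤ) + 1) ≠ 0 := by omega
      simp [hsU]; omega
  | succ m ih =>
    intro a
    rw [hsU]
    cases a with
    | zero =>
      have := ih 0
      rw [hsU_lt _ _ (by push_cast; omega)]
      have e : 2 * ((0 : ℕ) : ℤ) - ((m + 1 : ℕ) : ℤ) + 1 = 2 * ((0:ℕ) : ℤ) - m := by push_cast; ring
      rw [e, this]
      simp only [Nat.choose_zero_right, pow_succ]; push_cast; field_simp; ring
    | succ a =>
      have e : 2 * ((a + 1 : ℕ) : ℤ) - ((m + 1 : ℕ) : ℤ) + 1 = 2 * ((a + 1 :ℕ) : ℤ) - m := by push_cast; ring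
      have e' : 2 * ((a + 1 : ℕ) : ℤ) - ((m + 1 : ℕ) : ℤ) - 1 = 2 * (a : ℤ) - m := by push_cast; ring
      rw [e, e', ih, ih, Nat.choose_succ_succ]
      push_cast
      rw [pow_succ]; field_simp

lemma hsP_zero (m : ℕ) : hsP m 0 = hsU m 1 + hsU m 0 := by
  have := hsP_eq m 1
  simpa using this

lemma hsP_even (k : ℕ) : hsP (2 * k) 0 = (k.centralBinom : ℝ) / 4 ^ k := by
  rw [hsP_zero, hsU_odd _ _ (by push_cast; omega), zero_add]
  have := hsU_choose (2 * k) k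
  push_cast at this
  rw [sub_self] at this
  rw [this, Nat.centralBinom_eq_two_mul_choose, pow_mul]; norm_num

lemma hsP_odd (k : ℕ) : hsP (2 * k + 1) 0 = ((k + 1).centralBinom : ℝ) / 4 ^ (k + 1) := by
  rw [hsP_zero, hsU_odd _ 0 (by push_cast; omega), add_zero]
  have := hsU_choose (2 * k + 1) (k + 1)
  have e : 2 * ((k + 1 : ℕ) : ℤ) - ((2 * k + 1 : ℕ) : ℤ) = 1 := by push_cast; ring
  rw [e] at this
  rw [this, Nat.centralBinom_eq_two_mul_choose]
  have h : (2 * (k + 1)).choose (k + 1) = 2 * (2 * k + 1).choose (k + 1) := by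
    rw [show 2 * (k + 1) = (2 * k + 1) + 1 by ring, Nat.choose_succ_succ, Nat.choose_symm_half]; ring
  rw [h, show (4 : ℝ) = 2 ^ 2 by norm_num, ← pow_mul, show 2 * (k + 1) = (2 * k + 1) + 1 by ring, pow_succ _ (2 * k + 1)]
  push_cast
  rw [mul_comm (2:ℝ), mul_div_mul_right _ _ two_ne_zero]

lemma hs_cb_W (k : ℕ) : ((k.centralBinom : ℝ) / 4 ^ k) ^ 2 * (2 * k + 1) * Real.Wallis.W k = 1 := by
  rw [Real.Wallis.W_eq_factorial_ratio]
  have h : (k.centralBinom : ℝ) = (Nat.factorial (2 * k) : ℝ) / (Nat.factorial k) ^ 2 := by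
    have := Nat.choose_mul_factorial_mul_factorial (n := 2 * k) (k := k) (by omega)
    rw [← Nat.centralBinom_eq_two_mul_choose, show 2 * k - k = k by omega] at this
    rw [← this]
    have : (Nat.factorial k : ℝ) ≠ 0 := by positivity
    push_cast; field_simp
  rw [h]
  have h1 : (Nat.factorial k : ℝ) ≠ 0 := by positivity
  have h2 : (Nat.factorial (2 * k) : ℝ) ≠ 0 := by positivity
  have h3 : (2 * (k : ℝ) + 1) ≠ 0 := by positivity
  have h4 : (2 : ℝ) ^ (4 * k) = (4 ^ k) ^ 2 := by
    rw [← pow_mul, show (4:ℝ) = 2 ^ 2 by norm_num, ← pow_mul]; congr 1; ring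
  rw [h4]
  field_simp

lemma hs_cb_bounds (k : ℕ) : 2 ≤ ((k.centralBinom : ℝ) / 4 ^ k) ^ 2 * (2 * k + 1) * Real.pi ∧
    ((k.centralBinom : ℝ) / 4 ^ k) ^ 2 * k * Real.pi ≤ 1 := by
  have h := hs_cb_W k
  set c := ((k.centralBinom : ℝ) / 4 ^ k) ^ 2 with hc
  have hcpos : 0 ≤ c := sq_nonneg _
  have h1 := Real.Wallis.W_le k
  have h2 := Real.Wallis.le_W k
  constructor
  · have := mul_le_mul_of_nonneg_left h1 (show 0 ≤ c * (2 * (k:ℝ) + 1) by positivity)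
    linarith
  · have := mul_le_mul_of_nonneg_left h2 (show 0 ≤ c * (2 * (k:ℝ) + 1) by positivity)
    rw [h] at this
    refine le_trans ?_ this
    have e : c * (2 * (k:ℝ) + 1) * ((2 * k + 1) / (2 * k + 2) * (Real.pi / 2)) = c * Real.pi * ((2 * k + 1)^2 / (4 * (k + 1))) := by
      field_simp; ring
    rw [e]
    have : (k : ℝ) ≤ ((2 * k + 1)^2 / (4 * (k + 1))) := by
      rw [le_div_iff₀ (by positivity)]; nlinarith
    have h3 := mul_le_mul_of_nonneg_left this (show 0 ≤ c * Real.pi by positivity)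
    linarith

lemma hsP_bounds (m : ℕ) : 0 ≤ hsP m 0 ∧ hsP m 0 ≤ 1 ∧ 2 ≤ hsP m 0 ^ 2 * (m + 2) * Real.pi ∧
    hsP m 0 ^ 2 * m * Real.pi ≤ 2 := by
  have hle : ∀ k : ℕ, (k.centralBinom : ℝ) / 4 ^ k ≤ 1 := by
    intro k
    rw [div_le_one (by positivity)]
    exact_mod_cast Nat.centralBinom_le_four_pow k
  have hpi := Real.pi_pos
  obtain ⟨k, rfl | rfl⟩ := Nat.even_or_odd' m
  · rw [hsP_even]
    obtain ⟨h1, h2⟩ := hs_cb_bounds k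
    refine ⟨by positivity, hle k, ?_, ?_⟩
    · refine h1.trans ?_
      gcongr _ * ?_ * _
      push_cast; linarith
    · push_cast; linarith
  · rw [hsP_odd]
    obtain ⟨h1, h2⟩ := hs_cb_bounds (k+1)
    refine ⟨by positivity, hle _, ?_, ?_⟩
    · refine h1.trans ?_
      gcongr _ * ?_ * _
      push_cast; linarith
    · have : (((k+1).centralBinom : ℝ) / 4 ^ (k+1)) ^ 2 * ((2 * k + 1 : ℕ) : ℝ) * Real.pi ≤ (((k+1).centralBinom : ℝ) / 4 ^ (k+1)) ^ 2 * (2 * ((k + 1 : ℕ) : ℝ)) * Real.pi := by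
        gcongr; push_cast; linarith
      linarith

lemma hs_r (x δ r : ℝ) (hx : 1 / 2 ≤ x) (hδ : 0 ≤ δ) (hr0 : 0 ≤ r)
    (h1 : 1 ≤ r ^ 2 * (x + δ)) (h2 : r ^ 2 * x ≤ 1) :
    |r - 1 + (x - 1) / 2| ≤ (x - 1) ^ 2 + δ ∧ r ≤ 2 := by
  refine ⟨?_, by nlinarith⟩
  rw [abs_le]
  constructor
  · by_contra! hlt
    have hl : r < (3 - (x + δ)) / 2 := by nlinarith [sq_nonneg (x-1)]
    set y := x + δ with hy
    have hypos : 0 < y := by linarith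
    have h3 : r ^ 2 < ((3 - y) / 2) ^ 2 := by gcongr
    have h4 : ((3 - y) / 2) ^ 2 * y ≤ 1 := by
      have : y ≤ 3 := by linarith
      nlinarith [mul_nonneg (sq_nonneg (1 - y)) (show 0 ≤ 4 - y by linarith)]
    have h5 := mul_lt_mul_of_pos_right h3 hypos
    linarith
  · by_contra! hlt
    obtain ⟨e, rfl⟩ : ∃ e, x = 1 + e := ⟨x - 1, by ring⟩
    have hl : 1 - e / 2 + e ^ 2 < r := by nlinarith
    have h0 : 0 ≤ 1 - e / 2 + e ^ 2 := by nlinarith [sq_nonneg (e - 1)]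
    have h3 : (1 - e / 2 + e ^ 2) ^ 2 < r ^ 2 := by gcongr
    have h5 := mul_lt_mul_of_pos_right h3 (show 0 < 1 + e by linarith)
    have h6 : 0 ≤ 5 / 4 + 5 / 4 * e + e ^ 3 := by
      have : 0 ≤ (e + 1/2) := by linarith
      nlinarith [mul_nonneg this (sq_nonneg (e - 1/4)), mul_nonneg this (sq_nonneg e)]
    have h7 := mul_nonneg (sq_nonneg e) h6
    nlinarith

lemma hs_prod (d : ℕ) (B : ℝ) (hB : 0 ≤ B) (A : Finset (Fin d)) : ∃ C : ℝ, 0 ≤ C ∧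
    ∀ (r e : Fin d → ℝ) (δ : ℝ), 0 ≤ δ → (∀ j, 0 ≤ r j ∧ r j ≤ 2) → (∀ j, |e j| ≤ B) →
    (∀ j, |r j - 1 + e j / 2| ≤ e j ^ 2 + δ) →
    |∏ j ∈ A, r j - 1 + (∑ j ∈ A, e j) / 2| ≤ C * (∑ j, e j ^ 2 + δ) := by
  induction A using Finset.induction_on with
  | empty =>
    refine ⟨0, le_rfl, fun r e δ _ _ _ _ => by simp⟩
  | insert a A ha ih =>
    obtain ⟨C, hC, ih⟩ := ih
    refine ⟨2 * C + (A.card : ℝ) / 4 + (1 + A.card * B / 2), by positivity, fun r e δ hδ hr he h => ?_⟩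
    have ih' := ih r e δ hδ hr he h
    rw [Finset.prod_insert ha, Finset.sum_insert ha]
    set P := ∏ j ∈ A, r j
    set E := ∑ j ∈ A, e j with hE
    set Q := ∑ j, e j ^ 2 with hQ
    have hsq : ∀ j, e j ^ 2 ≤ Q := fun j =>
      Finset.single_le_sum (f := fun j => e j ^ 2) (fun i _ => sq_nonneg _) (Finset.mem_univ j)
    have hQ0 : 0 ≤ Q := Finset.sum_nonneg fun i _ => sq_nonneg _
    have hE1 : |E| ≤ A.card * B := by
      refine (Finset.abs_sum_le_sum_abs _ _).trans ?_
      refine (Finset.sum_le_card_nsmul _ _ B fun j _ => he j).trans ?_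
      simp
    have hE2 : |e a * E| ≤ A.card * Q := by
      rw [hE, Finset.mul_sum]
      refine (Finset.abs_sum_le_sum_abs _ _).trans ?_
      refine (Finset.sum_le_card_nsmul _ _ Q fun j _ => ?_).trans (by simp)
      rw [abs_le]
      have := hsq a
      have := hsq j
      constructor <;> nlinarith [sq_nonneg (e a - e j), sq_nonneg (e a + e j)]
    have e1 : r a * P - 1 + (e a + E) / 2 = r a * (P - 1 + E / 2) + (e a * E) / 4 +
      (r a - 1 + e a / 2) * (1 - E / 2) := by ring
    rw [e1]
    have t1 : |r a * (P - 1 + E / 2)| ≤ 2 * (C * (Q + δ)) := by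
      rw [abs_mul, abs_of_nonneg (hr a).1]
      exact mul_le_mul (hr a).2 ih' (abs_nonneg _) (by norm_num)
    have t2 : |e a * E / 4| ≤ A.card * (Q + δ) / 4 := by
      rw [abs_div, abs_of_pos (show (0:ℝ) < 4 by norm_num)]
      have : (0:ℝ) ≤ A.card * δ := by positivity
      linarith
    have t3 : |(r a - 1 + e a / 2) * (1 - E / 2)| ≤ (Q + δ) * (1 + A.card * B / 2) := by
      rw [abs_mul]
      refine mul_le_mul ((h a).trans (by linarith [hsq a])) ?_ (abs_nonneg _) (by positivity)
      rw [abs_le] at hE1 ⊢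
      constructor <;> linarith
    refine (abs_add_le _ _).trans ?_
    have := abs_add_le (r a * (P - 1 + E / 2)) (e a * E / 4)
    linarith

lemma hs_tail (d : ℕ) (κ : ℝ) (hκ : 0 < κ) :
    ∀ᶠ n : ℕ in atTop, (n : ℝ) ^ d * Real.exp (-κ * n) ≤ 1 / n := by
  have h := (Real.summable_pow_mul_exp_neg_nat_mul (d + 1) hκ).tendsto_atTop_zero
  have h1 := h.eventually (gt_mem_nhds (show (0:ℝ) < 1 by norm_num))
  filter_upwards [h1, eventually_gt_atTop 0] with n hn hn0
  have : (0:ℝ) < n := by exact_mod_cast hn0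
  rw [le_div_iff₀ this]
  rw [pow_succ] at hn
  linarith

section
variable {d : ℕ} {S : Finset (Fin d → ℤ)} {w : (Fin d → ℤ) → ℝ}

lemma hsAvg_abs (hstep : ∀ i ∈ S, (∀ j, i j = -1 ∨ i j = 0 ∨ i j = 1) ∧ i ≠ 0)
    (hw : ∀ i ∈ S, 0 < w i) (n : ℕ) (φ ψ : (Fin d → ℕ) → ℝ)
    (h : ∀ N, (∀ k, N k ≤ n) → |φ N| ≤ ψ N) : |hsAvg d S w n φ| ≤ hsAvg d S w n ψ := by
  rw [abs_le]
  constructor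
  · have h1 := hsAvg_mono hstep hw n (fun N => (-1) * ψ N) φ
      (fun N hN => by have := (abs_le.mp (h N hN)).1; linarith)
    rw [hsAvg_smul] at h1
    linarith
  · exact hsAvg_mono hstep hw n _ _ (fun N hN => (abs_le.mp (h N hN)).2)

/-- the pointwise estimate -/
lemma hs_pointwise (d : ℕ) (q : Fin d → ℝ) (hq : ∀ k, 0 < q k) : ∃ C D : ℝ, 0 ≤ C ∧ 0 ≤ D ∧
    ∀ n : ℕ, 1 ≤ n → ∀ N : Fin d → ℕ, (∀ k, N k ≤ n) →
    |∏ k, (hsP (N k) 0 * √(Real.pi * n * q k / 2)) - 1 + (∑ k, (N k / (n * q k) - 1)) / 2| ≤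
      C * (∑ k, (N k / (n * q k) - 1) ^ 2 + (∑ k, 2 / q k) / n) +
      D * (n : ℝ) ^ d * ∑ k, Real.exp (n * q k / 2) * (Real.exp (-1)) ^ (N k) := by
  set B := ∑ k, 1 / q k + 1 with hB
  have hqinv : ∀ k, 1 / q k ≤ ∑ k, 1 / q k := fun k =>
    Finset.single_le_sum (f := fun k => 1 / q k) (fun i _ => (by have := hq i; positivity)) (Finset.mem_univ k)
  have hq2 : ∀ k, 2 / q k ≤ ∑ k, 2 / q k := fun k =>
    Finset.single_le_sum (f := fun k => 2 / q k) (fun i _ => (by have := hq i; positivity)) (Finset.mem_univ k)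
  have hs0 : 0 ≤ ∑ k, 1 / q k := Finset.sum_nonneg (fun i _ => (by have := hq i; positivity))
  have hs2 : 0 ≤ ∑ k, 2 / q k := Finset.sum_nonneg (fun i _ => (by have := hq i; positivity))
  have hB0 : 0 ≤ B := by linarith
  obtain ⟨C, hC, hprod⟩ := hs_prod d B hB0 Finset.univ
  set R := ∏ k, √(Real.pi * q k / 2) with hR
  have hR0 : 0 ≤ R := Finset.prod_nonneg fun i _ => Real.sqrt_nonneg _
  refine ⟨C, R + 1 + d * B / 2, hC, by positivity, fun n hn N hN => ?_⟩
  have hn1 : (1:ℝ) ≤ n := by exact_mod_cast hn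
  have hn0 : (0:ℝ) < n := by linarith
  have hpi := Real.pi_pos
  have he : ∀ k, |(N k : ℝ) / (n * q k) - 1| ≤ B := by
    intro k
    have hk := hq k
    have h1 : (N k : ℝ) / (n * q k) ≤ 1 / q k := by
      rw [div_le_div_iff₀ (by positivity) hk]
      have : (N k : ℝ) ≤ n := by exact_mod_cast hN k
      nlinarith
    have h2 : 0 ≤ (N k : ℝ) / (n * q k) := by positivity
    have := hqinv k
    rw [abs_le]; constructor <;> linarith
  have hpos2 : 0 ≤ (R + 1 + d * B / 2) * (n : ℝ) ^ d := by positivity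
  have hterm : ∀ k, 0 ≤ Real.exp (n * q k / 2) * (Real.exp (-1)) ^ (N k) := fun k => by positivity
  have hQ : 0 ≤ ∑ k, ((N k : ℝ) / (n * q k) - 1) ^ 2 := Finset.sum_nonneg fun i _ => sq_nonneg _
  by_cases hall : ∀ k, 1 / 2 ≤ (N k : ℝ) / (n * q k)
  · have hk : ∀ k, _ := fun k => hs_r ((N k : ℝ) / (n * q k)) ((∑ k, 2 / q k) / n)
      (hsP (N k) 0 * √(Real.pi * n * q k / 2)) (hall k) (by positivity)
      (mul_nonneg (hsP_bounds _).1 (Real.sqrt_nonneg _))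
      (by
        have hk := hq k
        rw [mul_pow, Real.sq_sqrt (by positivity)]
        have h3 := (hsP_bounds (N k)).2.2.1
        have h4 : 2 / (n * q k) ≤ (∑ k, 2 / q k) / n := by
          rw [mul_comm, ← div_div]; gcongr; exact hq2 k
        calc (1:ℝ) ≤ hsP (N k) 0 ^ 2 * (Real.pi * n * q k / 2) * (N k / (n * q k) + 2 / (n * q k)) := by
              have : hsP (N k) 0 ^ 2 * (Real.pi * n * q k / 2) * (N k / (n * q k) + 2 / (n * q k)) = hsP (N k) 0 ^ 2 * (N k + 2) * Real.pi / 2 := by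
                field_simp
              rw [this]; linarith
          _ ≤ _ := by gcongr)
      (by
        have hk := hq k
        rw [mul_pow, Real.sq_sqrt (by positivity)]
        have h3 := (hsP_bounds (N k)).2.2.2
        have : hsP (N k) 0 ^ 2 * (Real.pi * n * q k / 2) * (N k / (n * q k)) = hsP (N k) 0 ^ 2 * N k * Real.pi / 2 := by
          field_simp
        rw [this]; linarith)
    have := hprod (fun k => hsP (N k) 0 * √(Real.pi * n * q k / 2)) (fun k => (N k : ℝ) / (n * q k) - 1)
      ((∑ k, 2 / q k) / n) (by positivity)
      (fun k => ⟨mul_nonneg (hsP_bounds _).1 (Real.sqrt_nonneg _), (hk k).2⟩) he (fun k => (hk k).1)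
    refine this.trans ?_
    have := mul_nonneg hpos2 (Finset.sum_nonneg fun k (_ : k ∈ Finset.univ) => hterm k)
    linarith
  · push Not at hall
    obtain ⟨k, hk⟩ := hall
    have hqk := hq k
    have h1 : 1 ≤ ∑ k, Real.exp (n * q k / 2) * (Real.exp (-1)) ^ (N k) := by
      refine le_trans ?_ (Finset.single_le_sum (fun i _ => hterm i) (Finset.mem_univ k))
      rw [← Real.exp_nat_mul, ← Real.exp_add]
      apply Real.one_le_exp
      rw [div_lt_iff₀ (by positivity)] at hk
      linarith
    have hP : ∏ k, (hsP (N k) 0 * √(Real.pi * n * q k / 2)) ≤ R * (n:ℝ) ^ d := by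
      have : R * (n:ℝ) ^ d = ∏ k, (√(Real.pi * q k / 2) * n) := by
        rw [Finset.prod_mul_distrib]; simp [hR]
      rw [this]
      refine Finset.prod_le_prod (fun i _ => mul_nonneg (hsP_bounds _).1 (Real.sqrt_nonneg _)) fun i _ => ?_
      have e : Real.pi * n * q i / 2 = (Real.pi * q i / 2) * n := by ring
      have hqi := hq i
      rw [e, Real.sqrt_mul (by positivity)]
      have h2 : √(n:ℝ) ≤ n := by
        rw [Real.sqrt_le_left (by positivity)]; nlinarith
      calc _ ≤ 1 * (√(Real.pi * q i / 2) * √(n:ℝ)) := by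
            gcongr; exact (hsP_bounds _).2.1
        _ ≤ _ := by rw [one_mul]; gcongr
    have hP0 : 0 ≤ ∏ k, (hsP (N k) 0 * √(Real.pi * n * q k / 2)) :=
      Finset.prod_nonneg (fun i _ => mul_nonneg (hsP_bounds _).1 (Real.sqrt_nonneg _))
    have hE : |∑ k, ((N k : ℝ) / (n * q k) - 1)| ≤ d * B := by
      refine (Finset.abs_sum_le_sum_abs _ _).trans ?_
      refine (Finset.sum_le_card_nsmul _ _ B fun j _ => he j).trans ?_
      simp
    have hnd : (1:ℝ) ≤ (n:ℝ) ^ d := one_le_pow₀ hn1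
    have h5 : |∏ k, (hsP (N k) 0 * √(Real.pi * n * q k / 2)) - 1 + (∑ k, ((N k : ℝ) / (n * q k) - 1)) / 2| ≤ (R + 1 + d * B / 2) * (n : ℝ) ^ d := by
      have : (1 + d * B / 2) ≤ (1 + d * B / 2) * (n : ℝ) ^ d := le_mul_of_one_le_right (by positivity) hnd
      have h7 : (0:ℝ) ≤ R * (n:ℝ) ^ d := by positivity
      rw [abs_le] at hE ⊢
      constructor <;> linarith
    have h6 := mul_le_mul_of_nonneg_left h1 hpos2
    have : 0 ≤ C * (∑ k, ((N k : ℝ) / (n * q k) - 1) ^ 2 + (∑ k, 2 / q k) / n) := by positivity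
    linarith

lemma hs_avg_asymp (hstep : ∀ i ∈ S, (∀ j, i j = -1 ∨ i j = 0 ∨ i j = 1) ∧ i ≠ 0)
    (hw : ∀ i ∈ S, 0 < w i) (hsym : ∀ k : Fin d, SymmetricAxis d S w k)
    (q : Fin d → ℝ) (hq : ∀ k, 0 < q k)
    (hqT : ∀ k, (∑ i ∈ S, w i) * q k = 2 * ∑ i ∈ S.filter (fun i => i k = 1), w i) :
    ∃ C : ℝ, ∀ᶠ n : ℕ in atTop,
      |hsAvg d S w n (fun N => ∏ k, (hsP (N k) 0 * √(Real.pi * n * q k / 2))) - (∑ i ∈ S, w i) ^ n|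
        ≤ C * (∑ i ∈ S, w i) ^ n / n := by
  obtain ⟨C, D, hC, hD, hpt⟩ := hs_pointwise d q hq
  set T := ∑ i ∈ S, w i with hT
  have hT0 : 0 ≤ T := Finset.sum_nonneg fun i hi => (hw i hi).le
  have hexp : Real.exp (-1) < 1 / 2 := by
    have := Real.exp_neg_one_lt_d9; linarith
  have htail : ∀ᶠ n : ℕ in atTop, ∀ k : Fin d,
      (n : ℝ) ^ d * Real.exp (-(q k * (1 / 2 - Real.exp (-1))) * n) ≤ 1 / n := by
    rw [Filter.eventually_all]
    intro k
    exact hs_tail d _ (mul_pos (hq k) (by linarith))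
  refine ⟨C * (∑ k, 1 / q k + ∑ k, 2 / q k) + D * d, ?_⟩
  filter_upwards [htail, eventually_ge_atTop 1] with n htn hn
  have hn1 : (1:ℝ) ≤ n := by exact_mod_cast hn
  have hn0 : (0:ℝ) < n := by linarith
  have hTn : 0 ≤ T ^ n := by positivity
  have hlin : ∀ k, hsAvg d S w n (fun N => (N k : ℝ) / (n * q k) - 1) = 0 := by
    intro k
    have hk := hq k
    have h1 := hsAvg_lin hstep k (hsym k) (q k) (hqT k) n (-(n * q k))
    have h2 := hsAvg_smul (S := S) (w := w) n (1 / (n * q k)) (fun N => (N k : ℝ) + -(n * q k))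
    rw [h1] at h2
    have e : (fun N : Fin d → ℕ => (N k : ℝ) / (n * q k) - 1) = fun N => 1 / (n * q k) * ((N k : ℝ) + -(n * q k)) := by
      funext N; field_simp; ring
    rw [e, h2]; ring
  have hsq : ∀ k, hsAvg d S w n (fun N => ((N k : ℝ) / (n * q k) - 1) ^ 2) ≤ (1 / q k) / n * T ^ n := by
    intro k
    have hk := hq k
    have h1 := hsAvg_sq hstep k (hsym k) (q k) (hqT k) n (-(n * q k))
    have h2 := hsAvg_smul (S := S) (w := w) n (1 / (n * q k) ^ 2) (fun N => ((N k : ℝ) + -(n * q k)) ^ 2)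
    rw [h1] at h2
    have e : (fun N : Fin d → ℕ => ((N k : ℝ) / (n * q k) - 1) ^ 2) = fun N => 1 / (n * q k) ^ 2 * ((N k : ℝ) + -(n * q k)) ^ 2 := by
      funext N; field_simp; ring
    rw [e, h2]
    have e2 : 1 / (n * q k) ^ 2 * (((n * q k + -(n * q k)) ^ 2 + n * (q k * (1 - q k))) * T ^ n) = (1 / q k) / n * T ^ n - T ^ n / n := by
      field_simp; ring
    rw [← hT, e2]
    have : 0 ≤ T ^ n / n := by positivity
    linarith
  have hgeo : ∀ k, (n:ℝ) ^ d * hsAvg d S w n (fun N => Real.exp (n * q k / 2) * (Real.exp (-1)) ^ (N k)) ≤ 1 / n * T ^ n := by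
    intro k
    rw [hsAvg_smul, hsAvg_geom]
    have h0 : 0 ≤ ∑ i ∈ S, w i * Real.exp (-1) ^ (i k).natAbs :=
      Finset.sum_nonneg fun i hi => mul_nonneg (hw i hi).le (by positivity)
    have h1 : ∑ i ∈ S, w i * Real.exp (-1) ^ (i k).natAbs ≤ T * Real.exp (-(q k * (1 - Real.exp (-1)))) := by
      rw [hs_sum_q hstep k (hsym k) (fun m => Real.exp (-1) ^ m), ← hqT k, ← hT]
      have := Real.add_one_le_exp (-(q k * (1 - Real.exp (-1))))
      have := mul_le_mul_of_nonneg_left this hT0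
      simp only [pow_zero, pow_one]
      linarith
    have h2 := pow_le_pow_left₀ h0 h1 n
    rw [mul_pow, ← Real.exp_nat_mul] at h2
    calc _ ≤ (n:ℝ) ^ d * (Real.exp (n * q k / 2) * (T ^ n * Real.exp (n * -(q k * (1 - Real.exp (-1)))))) := by gcongr
      _ = (n:ℝ) ^ d * (Real.exp (n * q k / 2) * Real.exp (n * -(q k * (1 - Real.exp (-1))))) * T ^ n := by ring
      _ = (n:ℝ) ^ d * Real.exp (-(q k * (1 / 2 - Real.exp (-1))) * n) * T ^ n := by
          rw [← Real.exp_add]; congr 3; ring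
      _ ≤ _ := by gcongr; exact htn k
  have hA := hsAvg_abs hstep hw n _ _ (hpt n hn)
  have hL : hsAvg d S w n (fun N => ∏ k, (hsP (N k) 0 * √(Real.pi * n * q k / 2)) - 1 + (∑ k, ((N k : ℝ) / (n * q k) - 1)) / 2)
      = hsAvg d S w n (fun N => ∏ k, (hsP (N k) 0 * √(Real.pi * n * q k / 2))) - T ^ n := by
    have e : (fun N : Fin d → ℕ => ∏ k, (hsP (N k) 0 * √(Real.pi * n * q k / 2)) - 1 + (∑ k, ((N k : ℝ) / (n * q k) - 1)) / 2)
      = fun N => (∏ k, (hsP (N k) 0 * √(Real.pi * n * q k / 2)) + (-1)) + (1 / 2) * (∑ k, ((N k : ℝ) / (n * q k) - 1)) := by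
      funext N; ring
    rw [e, hsAvg_add, hsAvg_add, hsAvg_const, hsAvg_smul, hsAvg_sum]
    simp only [hlin, Finset.sum_const_zero]
    ring
  rw [hL] at hA
  refine hA.trans ?_
  have hR : hsAvg d S w n (fun N => C * (∑ k, ((N k : ℝ) / (n * q k) - 1) ^ 2 + (∑ k, 2 / q k) / n) +
      D * (n : ℝ) ^ d * ∑ k, Real.exp (n * q k / 2) * (Real.exp (-1)) ^ (N k)) =
      C * (∑ k, hsAvg d S w n (fun N => ((N k : ℝ) / (n * q k) - 1) ^ 2) + (∑ k, 2 / q k) / n * T ^ n) +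
      D * ∑ k, (n:ℝ) ^ d * hsAvg d S w n (fun N => Real.exp (n * q k / 2) * (Real.exp (-1)) ^ (N k)) := by
    rw [hsAvg_add, hsAvg_smul, hsAvg_smul, hsAvg_add, hsAvg_const, hsAvg_sum, hsAvg_sum, ← Finset.mul_sum, ← hT]
    ring
  rw [hR]
  have h1 := Finset.sum_le_sum fun k (_ : k ∈ Finset.univ) => hsq k
  have h2 := Finset.sum_le_sum fun k (_ : k ∈ Finset.univ) => hgeo k
  rw [← Finset.sum_mul, ← Finset.sum_div] at h1
  rw [Finset.sum_const, Finset.card_univ, Fintype.card_fin, nsmul_eq_mul] at h2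
  calc _ ≤ C * ((∑ k, 1 / q k) / n * T ^ n + (∑ k, 2 / q k) / n * T ^ n) + D * (d * (1 / n * T ^ n)) := by gcongr
    _ = _ := by field_simp
end

/-- Highly symmetric asymptotics (Melczer–Mishna):
`s_n = S(1)^n n^{-d/2} [ (S(1)/π)^{d/2} (b_1⋯b_d)^{-1/2} + O(1/n) ]`. -/
theorem highly_symmetric_asymptotics
    (d : ℕ) (hd : 1 ≤ d) (S : Finset (Fin d → ℤ)) (w : (Fin d → ℤ) → ℝ)
    (hstep : ∀ i ∈ S, (∀ j, i j = -1 ∨ i j = 0 ∨ i j = 1) ∧ i ≠ 0)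
    (hw : ∀ i ∈ S, 0 < w i)
    (hsym : ∀ k : Fin d, SymmetricAxis d S w k)
    (hfwd : ∀ k : Fin d, ∃ i ∈ S, i k = 1)
    (hbwd : ∀ k : Fin d, ∃ i ∈ S, i k = -1) :
    ∃ C : ℝ, ∀ᶠ n : ℕ in atTop,
      |walkWeight d S w n -
          (∑ i ∈ S, w i) ^ n * (n : ℝ) ^ (-(d : ℝ) / 2) *
            (((∑ i ∈ S, w i) / Real.pi) ^ ((d : ℝ) / 2) *
              (∏ k : Fin d, ∑ i ∈ S.filter fun i => i k = 1, w i) ^ (-(1 : ℝ) / 2))|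
        ≤ C * (∑ i ∈ S, w i) ^ n * (n : ℝ) ^ (-(d : ℝ) / 2) / n := by
  have hb : ∀ k : Fin d, 0 < ∑ i ∈ S.filter (fun i => i k = 1), w i := by
    intro k
    obtain ⟨i, hi, hik⟩ := hfwd k
    exact Finset.sum_pos (fun i hi => hw i (Finset.mem_filter.mp hi).1) ⟨i, Finset.mem_filter.mpr ⟨hi, hik⟩⟩
  have hT : 0 < ∑ i ∈ S, w i := by
    obtain ⟨i, hi, -⟩ := hfwd ⟨0, hd⟩
    exact Finset.sum_pos hw ⟨i, hi⟩
  obtain ⟨C, hC⟩ := hs_avg_asymp hstep hw hsym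
    (fun k => 2 * (∑ i ∈ S.filter (fun i => i k = 1), w i) / ∑ i ∈ S, w i)
    (fun k => div_pos (mul_pos two_pos (hb k)) hT) (fun k => by field_simp)
  set T := ∑ i ∈ S, w i
  set b : Fin d → ℝ := fun k => ∑ i ∈ S.filter (fun i => i k = 1), w i with hbdef
  change ∀ k, 0 < b k at hb
  set L := (T / Real.pi) ^ ((d : ℝ) / 2) * (∏ k : Fin d, b k) ^ (-(1 : ℝ) / 2) with hL
  have hpi := Real.pi_pos
  have hbp : 0 < ∏ k, b k := Finset.prod_pos fun k _ => hb k
  have hLpos : 0 < L := by positivity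
  refine ⟨C * L, ?_⟩
  filter_upwards [hC, eventually_ge_atTop 1] with n hn hn1
  have hn0 : (0:ℝ) < n := by exact_mod_cast hn1
  have hG : (n : ℝ) ^ (-(d : ℝ) / 2) * L * (∏ k, √(Real.pi * n * (2 * b k / T) / 2)) = 1 := by
    have e1 : ∀ k, √(Real.pi * n * (2 * b k / T) / 2) = (n * (T / Real.pi)⁻¹ * b k) ^ ((1:ℝ) / 2) := by
      intro k
      rw [Real.sqrt_eq_rpow]; congr 1; field_simp
    simp only [e1]
    rw [Real.finsetProd_rpow _ _ (fun k _ => by have := hb k; positivity), Finset.prod_mul_distrib,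
      Finset.prod_const, Finset.card_univ, Fintype.card_fin, Real.mul_rpow (by positivity) hbp.le,
      ← Real.rpow_natCast, ← Real.rpow_mul (by positivity), Real.mul_rpow hn0.le (by positivity),
      Real.inv_rpow (by positivity), hL, neg_div, neg_div, Real.rpow_neg hn0.le, Real.rpow_neg hbp.le,
      mul_one_div]
    have p1 : (0:ℝ) < (n:ℝ) ^ ((d:ℝ) / 2) := by positivity
    have p2 : (0:ℝ) < (T / Real.pi) ^ ((d:ℝ) / 2) := by positivity
    have p3 : (0:ℝ) < (∏ k, b k) ^ ((1:ℝ) / 2) := by positivity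
    field_simp
  set G := ∏ k, √(Real.pi * n * (2 * b k / T) / 2) with hGdef
  set A := (n : ℝ) ^ (-(d : ℝ) / 2) with hA
  have hApos : 0 < A := by positivity
  have hW : hsAvg d S w n (fun N => ∏ k, (hsP (N k) 0 * √(Real.pi * n * (2 * b k / T) / 2))) = G * walkWeight d S w n := by
    rw [hs_main_avg hstep hsym, ← hsAvg_smul]
    congr 1
    funext N
    rw [Finset.prod_mul_distrib, mul_comm]
  have hn' : |G * walkWeight d S w n - T ^ n| ≤ C * T ^ n / n := by
    rw [← hW]; exact hn
  have e : walkWeight d S w n - T ^ n * A * L = A * L * (G * walkWeight d S w n - T ^ n) := by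
    linear_combination (-walkWeight d S w n) * hG
  change |walkWeight d S w n - T ^ n * A * L| ≤ _
  rw [e, abs_mul, abs_of_pos (by positivity)]
  calc _ ≤ A * L * (C * T ^ n / n) := by gcongr
    _ = _ := by ring

end
end

section
/- Let S ⊆ {-1,0,1}^d \ {0} be a step set (with positive weights) that is symmetric over all but the d-th axis and takes a step forwards and backwards in each coordinate. If S has positive drift (B(1) - A(1) > 0), then the total weight s_n of walks of length n taking steps in S, starting at the origin, and never leaving ℕ^d satisfies s_n = S(1)^n · n^{-(d-1)/2} · [ (S(1)/π)^{(d-1)/2} · (B(1) - A(1)) / (B(1) · √(b_1 ··· b_{d-1})) + O(1/n) ] as n → ∞. -/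
open Finset Filter
open scoped Classical

noncomputable section

/-- central binomial survival probability -/
def hh (N : ℕ) (a : ℤ) : ℝ :=
  (∑ j ∈ Finset.range (N + 1), if (N : ℤ) - a ≤ 2 * j ∧ 2 * (j : ℤ) ≤ N + a + 1 then (N.choose j : ℝ) else 0) / 2 ^ N

lemma hh_neg (N : ℕ) (a : ℤ) (ha : a < 0) : hh N a = 0 := by
  unfold hh
  rw [Finset.sum_eq_zero, zero_div]
  intro j _
  rw [if_neg]
  omega

lemma hh_zero (a : ℤ) (ha : 0 ≤ a) : hh 0 a = 1 := by
  unfold hh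
  simp
  omega

lemma hh_succ (N : ℕ) (a : ℤ) (ha : 0 ≤ a) : 2 * hh (N + 1) a = hh N (a + 1) + hh N (a - 1) := by
  unfold hh
  rw [pow_succ, ← add_div, mul_comm (2 ^ N : ℝ) 2, ← mul_div_assoc, mul_div_mul_left _ _ (by norm_num : (2:ℝ) ≠ 0)]
  congr 1
  rw [← Finset.sum_add_distrib, Finset.sum_range_succ']
  have e1 : ∀ k : ℕ, (if ((N + 1 : ℕ) : ℤ) - a ≤ 2 * ((k + 1 : ℕ) : ℤ) ∧ 2 * ((k + 1 : ℕ) : ℤ) ≤ ((N + 1 : ℕ) : ℤ) + a + 1 then ((N + 1).choose (k + 1) : ℝ) else 0)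
     = (if (N : ℤ) - (a + 1) ≤ 2 * k ∧ 2 * (k : ℤ) ≤ N + a then (N.choose k : ℝ) else 0)
      + (if (N : ℤ) - (a - 1) ≤ 2 * ((k + 1 : ℕ) : ℤ) ∧ 2 * ((k + 1 : ℕ) : ℤ) ≤ N + a + 2 then (N.choose (k + 1) : ℝ) else 0) := by
    intro k
    rw [Nat.choose_succ_succ]
    push_cast
    by_cases h : (N : ℤ) - (a + 1) ≤ 2 * k ∧ 2 * (k : ℤ) ≤ N + a
    · rw [if_pos h, if_pos (by omega), if_pos (by omega)]
    · rw [if_neg h, if_neg (by omega), if_neg (by omega)]; simp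
  rw [Finset.sum_congr rfl (fun k _ => e1 k), Finset.sum_add_distrib, add_assoc]
  have e2 : (if ((N + 1 : ℕ) : ℤ) - a ≤ 2 * ((0 : ℕ) : ℤ) ∧ 2 * ((0 : ℕ) : ℤ) ≤ ((N + 1 : ℕ) : ℤ) + a + 1 then ((N + 1).choose 0 : ℝ) else 0)
     = (if (N : ℤ) - (a - 1) ≤ 2 * ((0 : ℕ) : ℤ) ∧ 2 * ((0 : ℕ) : ℤ) ≤ N + a + 2 then (N.choose 0 : ℝ) else 0) := by
    simp only [Nat.choose_zero_right]
    congr 1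
    simp only [eq_iff_iff]
    omega
  rw [e2, ← Finset.sum_range_succ' (fun k : ℕ => if (N : ℤ) - (a - 1) ≤ 2 * (k : ℤ) ∧ 2 * (k : ℤ) ≤ N + a + 2 then (N.choose k : ℝ) else 0) (N + 1),
    Finset.sum_range_succ _ (N + 1)]
  simp only [Nat.choose_succ_self, Nat.cast_zero, ite_self, add_zero]
  rw [← Finset.sum_add_distrib]
  apply Finset.sum_congr rfl
  intro k _
  by_cases h1 : (N : ℤ) - (a + 1) ≤ 2 * k <;> by_cases h2 : 2 * (k : ℤ) ≤ N + a <;>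
  by_cases h3 : (N : ℤ) - (a - 1) ≤ 2 * k <;> by_cases h4 : 2 * (k : ℤ) ≤ N + a + 2 <;>
   first
   | omega
   | (have h5 : (2 * (k : ℤ) ≤ N + (a + 1) + 1) ↔ 2 * (k : ℤ) ≤ N + a + 2 := by omega
      have h6 : (2 * (k : ℤ) ≤ N + (a - 1) + 1) ↔ 2 * (k : ℤ) ≤ N + a := by omega
      simp [h5, h6, h1, h2, h3, h4])

lemma hh_zero_right (N : ℕ) : hh N 0 = (N.choose (N / 2) : ℝ) / 2 ^ N := by
  unfold hh
  congr 1
  have hm : N / 2 ∈ Finset.range (N + 1) ∨ True := Or.inr trivial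
  have : ∀ j : ℕ, (if (N : ℤ) - 0 ≤ 2 * j ∧ 2 * (j : ℤ) ≤ N + 0 + 1 then (N.choose j : ℝ) else 0)
     = if j = (N + 1) / 2 then (N.choose j : ℝ) else 0 := by
    intro j
    congr 1
    simp only [eq_iff_iff]
    omega
  rw [Finset.sum_congr rfl (fun j _ => this j), Finset.sum_ite_eq' , if_pos (by simp; omega)]
  congr 1
  rw [← Nat.choose_symm_of_eq_add (show N = N / 2 + (N + 1) / 2 by omega)]

lemma hh_le_one (N : ℕ) : hh N 0 ≤ 1 := by
  rw [hh_zero_right, div_le_one (by positivity)]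
  exact_mod_cast Nat.choose_le_two_pow _ _

lemma hh_nonneg (N : ℕ) : 0 ≤ hh N 0 := by
  rw [hh_zero_right]; positivity

lemma central_wallis (k : ℕ) : ((2 * k).choose k / 2 ^ (2 * k) : ℝ) ^ 2 * (Real.Wallis.W k * (2 * k + 1)) = 1 := by
  induction k with
  | zero => simp [Real.Wallis.W]
  | succ k ih =>
    rw [Real.Wallis.W_succ]
    have h := Nat.succ_mul_centralBinom_succ k
    unfold Nat.centralBinom at h
    have h' : ((k : ℝ) + 1) * ((2 * (k + 1)).choose (k + 1) : ℝ) = 2 * (2 * k + 1) * ((2 * k).choose k : ℝ) := by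
      exact_mod_cast h
    have h'' : ((2 * (k + 1)).choose (k + 1) : ℝ) = 2 * (2 * k + 1) * ((2 * k).choose k : ℝ) / (k + 1) := by
      rw [eq_div_iff (by positivity)]; linarith
    rw [h'']
    refine Eq.trans ?_ ih
    have : (2 : ℝ) ^ (2 * (k + 1)) = 4 * 2 ^ (2 * k) := by ring
    rw [this]
    push_cast
    field_simp
    ring

lemma hh_even (k : ℕ) : hh (2 * k) 0 = (2 * k).choose k / 2 ^ (2 * k) := by
  rw [hh_zero_right]; simp

lemma hh_odd (k : ℕ) : hh (2 * k + 1) 0 = (2 * (k + 1)).choose (k + 1) / 2 ^ (2 * (k + 1)) := by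
  rw [hh_zero_right, show (2 * k + 1) / 2 = k by omega]
  have : (2 * (k + 1)).choose (k + 1) = 2 * (2 * k + 1).choose k := by
    rw [show 2 * (k + 1) = (2 * k + 1) + 1 by ring, Nat.choose_succ_succ, Nat.choose_symm_half]; ring
  rw [this]
  push_cast
  rw [show 2 * (k + 1) = (2 * k + 1) + 1 by ring, pow_succ]
  field_simp
  ring

lemma hh_bound (N : ℕ) (hN : 1 ≤ N) :
    1 - 2 / (N : ℝ) ≤ hh N 0 ^ 2 * (Real.pi * N / 2) ∧ hh N 0 ^ 2 * (Real.pi * N / 2) ≤ 1 := by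
  have key : ∀ k : ℕ, ∀ g M : ℝ, g ^ 2 * (Real.Wallis.W k * (2 * k + 1)) = 1 → 1 ≤ M →
     (M = 2 * k ∨ M = 2 * k - 1) → 1 - 2 / M ≤ g ^ 2 * (Real.pi * M / 2) ∧ g ^ 2 * (Real.pi * M / 2) ≤ 1 := by
    intro k g M h1 hM h
    have h2 := Real.Wallis.W_le k
    have h3 := Real.Wallis.le_W k
    have h4 := Real.Wallis.W_pos k
    have hg : g ^ 2 = 1 / (Real.Wallis.W k * (2 * k + 1)) := by
      rw [eq_div_iff (by positivity)]; exact h1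
    have hpi := Real.pi_pos
    rw [hg]
    set W := Real.Wallis.W k
    have hk : (0:ℝ) ≤ k := Nat.cast_nonneg k
    constructor
    · have : (M / (M + 2)) ≤ 1 / (W * (2 * k + 1)) * (Real.pi * M / 2) := by
        rw [div_mul_div_comm, div_le_div_iff₀ (by positivity) (by positivity)]
        have : W * (2 * k + 1) * 2 ≤ Real.pi * (M + 2) := by
          calc _ ≤ (Real.pi / 2) * (2 * k + 1) * 2 := by gcongr
            _ = Real.pi * (2 * k + 1) := by ring
            _ ≤ _ := mul_le_mul_of_nonneg_left (by rcases h with h | h <;> linarith) hpi.le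
        nlinarith
      refine le_trans ?_ this
      rw [le_div_iff₀ (by positivity), sub_mul, div_mul_eq_mul_div, sub_le_iff_le_add]
      have : 2 * (M + 2) / M = 2 + 4 / M := by field_simp; ring
      rw [this]
      have : 0 < 4 / M := by positivity
      linarith
    · rw [div_mul_div_comm, div_le_one (by positivity)]
      have h5 : (2 * k + 1) * Real.pi ≤ W * (2 * (2 * k + 2)) := by
        rw [div_mul_div_comm, div_le_iff₀ (by positivity)] at h3
        nlinarith
      have h6 : M * (2 * k + 2) ≤ (2 * k + 1) ^ 2 := by
        rcases h with h | h <;> rw [h] <;> nlinarith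
      have h7 : 1 * (Real.pi * M) * (2 * k + 2) ≤ (W * (2 * k + 1) * 2) * (2 * k + 2) := by
        calc _ = Real.pi * (M * (2 * k + 2)) := by ring
          _ ≤ Real.pi * (2 * k + 1) ^ 2 := by gcongr
          _ = ((2 * k + 1) * Real.pi) * (2 * k + 1) := by ring
          _ ≤ (W * (2 * (2 * k + 2))) * (2 * k + 1) := by gcongr
          _ = _ := by ring
      exact le_of_mul_le_mul_right h7 (by positivity)
  have hN' : (1:ℝ) ≤ N := by exact_mod_cast hN
  rcases Nat.even_or_odd' N with ⟨k, hk | hk⟩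
  · apply key k _ _ _ hN'
    · left; rw [hk]; push_cast; ring
    · rw [hk, hh_even]; exact central_wallis k
  · apply key (k + 1) _ _ _ hN'
    · right; rw [hk]; push_cast; ring
    · rw [hk, hh_odd]; exact central_wallis (k + 1)

/-- killed operator -/
def Tn {d : ℕ} (S : Finset (Fin (d + 1) → ℤ)) (p : (Fin (d + 1) → ℤ) → ℝ) :
    ℕ → ((Fin d → ℕ) → ℝ) → (Fin d → ℕ) → ℤ → ℝ
  | 0, φ, c, z => if 0 ≤ z then φ c else 0
  | n + 1, φ, c, z => if 0 ≤ z then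
      ∑ i ∈ S, p i * Tn S p n φ (fun k => c k + (i (Fin.castSucc k)).natAbs) (z + i (Fin.last d)) else 0

section Tops
variable {d : ℕ} (S : Finset (Fin (d + 1) → ℤ)) (p : (Fin (d + 1) → ℤ) → ℝ)

lemma Tn_neg (n : ℕ) (φ : (Fin d → ℕ) → ℝ) (c : Fin d → ℕ) (z : ℤ) (hz : z < 0) : Tn S p n φ c z = 0 := by
  cases n <;> simp [Tn, not_le.mpr hz]

lemma Tn_add (n : ℕ) (φ ψ : (Fin d → ℕ) → ℝ) (c : Fin d → ℕ) (z : ℤ) :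
    Tn S p n (fun c => φ c + ψ c) c z = Tn S p n φ c z + Tn S p n ψ c z := by
  induction n generalizing c z with
  | zero => simp only [Tn]; split_ifs <;> simp
  | succ n ih =>
    simp only [Tn]; split_ifs
    · simp only [ih, mul_add, Finset.sum_add_distrib]
    · simp

lemma Tn_smul (n : ℕ) (a : ℝ) (φ : (Fin d → ℕ) → ℝ) (c : Fin d → ℕ) (z : ℤ) :
    Tn S p n (fun c => a * φ c) c z = a * Tn S p n φ c z := by
  induction n generalizing c z with
  | zero => simp only [Tn]; split_ifs <;> simp
  | succ n ih =>
    simp only [Tn]; split_ifs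
    · simp only [ih, Finset.mul_sum]; apply Finset.sum_congr rfl; intros; ring
    · simp

lemma Tn_sum {ι : Type*} (s : Finset ι) (n : ℕ) (φ : ι → (Fin d → ℕ) → ℝ) (c : Fin d → ℕ) (z : ℤ) :
    Tn S p n (fun c => ∑ j ∈ s, φ j c) c z = ∑ j ∈ s, Tn S p n (φ j) c z := by
  induction s using Finset.induction_on with
  | empty =>
    simp only [Finset.sum_empty]
    have := Tn_smul S p n 0 (fun _ => 0) c z
    simpa using this
  | insert a s ha ih =>
    simp only [Finset.sum_insert ha]
    rw [Tn_add, ih]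

lemma Tn_mono (hp : ∀ i ∈ S, 0 ≤ p i) (n : ℕ) (φ ψ : (Fin d → ℕ) → ℝ) (h : ∀ c, φ c ≤ ψ c) (c : Fin d → ℕ) (z : ℤ) :
    Tn S p n φ c z ≤ Tn S p n ψ c z := by
  induction n generalizing c z with
  | zero => simp only [Tn]; split_ifs <;> simp [h]
  | succ n ih =>
    simp only [Tn]; split_ifs
    · exact Finset.sum_le_sum fun i hi => mul_le_mul_of_nonneg_left (ih _ _) (hp i hi)
    · simp

lemma Tn_shift (n : ℕ) (φ : (Fin d → ℕ) → ℝ) (c e : Fin d → ℕ) (z : ℤ) :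
    Tn S p n φ (fun k => c k + e k) z = Tn S p n (fun c => φ (fun k => c k + e k)) c z := by
  induction n generalizing c z with
  | zero => simp only [Tn]
  | succ n ih =>
    simp only [Tn]; split_ifs
    · apply Finset.sum_congr rfl
      intro i _
      rw [← ih]
      congr 2
      funext k; ring
    · rfl

lemma Tn_one (n : ℕ) (c : Fin d → ℕ) (z : ℤ) :
    Tn S p n (fun _ => 1) c z = Tn S p n (fun _ => 1) 0 z := by
  have := Tn_shift S p n (fun _ => 1) 0 c z
  simpa using this

variable (hp : ∀ i ∈ S, 0 ≤ p i) (hp1 : ∑ i ∈ S, p i = 1)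

/-- activity probability -/
def PP {d : ℕ} (S : Finset (Fin (d + 1) → ℤ)) (p : (Fin (d + 1) → ℤ) → ℝ) (k : Fin d) : ℝ :=
  ∑ i ∈ S, p i * ((i (Fin.castSucc k)).natAbs : ℝ)

lemma Tn_sq (hp : ∀ i ∈ S, 0 ≤ p i) (hp1 : ∑ i ∈ S, p i = 1)
    (hstep : ∀ i ∈ S, (∀ j, i j = -1 ∨ i j = 0 ∨ i j = 1)) (hP1 : ∀ k, PP S p k ≤ 1) (hP0 : ∀ k, 0 ≤ PP S p k)
    (n : ℕ) (k : Fin d) (m : ℝ) (c : Fin d → ℕ) (z : ℤ) :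
    Tn S p n (fun c => ((c k : ℝ) - m) ^ 2) c z ≤ ((c k : ℝ) + n * PP S p k - m) ^ 2 + n * PP S p k * (1 - PP S p k) := by
  induction n generalizing c z with
  | zero => simp only [Tn]; split_ifs <;> simp; positivity
  | succ n ih =>
    have h1 := hP1 k
    have h0 := hP0 k
    have h2 : 0 ≤ 1 - PP S p k := by linarith
    simp only [Tn]; split_ifs
    · calc _ ≤ ∑ i ∈ S, p i * ((((c k + (i (Fin.castSucc k)).natAbs : ℕ) : ℝ) + n * PP S p k - m) ^ 2 + n * PP S p k * (1 - PP S p k)) :=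
          Finset.sum_le_sum fun i hi => mul_le_mul_of_nonneg_left (ih (fun k => c k + (i (Fin.castSucc k)).natAbs) (z + i (Fin.last d))) (hp i hi)
        _ = ∑ i ∈ S, ((((c k : ℝ) + n * PP S p k - m) ^ 2 + n * PP S p k * (1 - PP S p k)) * p i +
              (2 * ((c k : ℝ) + n * PP S p k - m) + 1) * (p i * ((i (Fin.castSucc k)).natAbs : ℝ))) := by
          apply Finset.sum_congr rfl
          intro i hi
          have : ((i (Fin.castSucc k)).natAbs : ℝ) ^ 2 = ((i (Fin.castSucc k)).natAbs : ℝ) := by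
            rcases (hstep i hi) (Fin.castSucc k) with h | h | h <;> rw [h] <;> simp
          push_cast
          linear_combination p i * this
        _ = (((c k : ℝ) + n * PP S p k - m) ^ 2 + n * PP S p k * (1 - PP S p k)) +
              (2 * ((c k : ℝ) + n * PP S p k - m) + 1) * PP S p k := by
          rw [Finset.sum_add_distrib, ← Finset.mul_sum, ← Finset.mul_sum, hp1]; simp only [PP, mul_one]
        _ ≤ _ := by
          apply le_of_eq
          push_cast
          generalize PP S p k = P
          ring
    · push_cast; positivity

lemma Tn_exp (hp : ∀ i ∈ S, 0 ≤ p i) (hp1 : ∑ i ∈ S, p i = 1)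
    (hstep : ∀ i ∈ S, (∀ j, i j = -1 ∨ i j = 0 ∨ i j = 1)) (hP1 : ∀ k, PP S p k ≤ 1)
    (n : ℕ) (k : Fin d) (c : Fin d → ℕ) (z : ℤ) :
    Tn S p n (fun c => (1 / 2 : ℝ) ^ (c k)) c z ≤ (1 / 2 : ℝ) ^ (c k) * (1 - PP S p k / 2) ^ n := by
  have h2 : 0 ≤ 1 - PP S p k / 2 := by linarith [hP1 k]
  induction n generalizing c z with
  | zero => simp only [Tn]; split_ifs <;> simp
  | succ n ih =>
    simp only [Tn]; split_ifs
    · calc _ ≤ ∑ i ∈ S, p i * ((1 / 2 : ℝ) ^ (c k + (i (Fin.castSucc k)).natAbs) * (1 - PP S p k / 2) ^ n) :=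
          Finset.sum_le_sum fun i hi => mul_le_mul_of_nonneg_left (ih _ _) (hp i hi)
        _ = ∑ i ∈ S, (((1 / 2 : ℝ) ^ (c k) * (1 - PP S p k / 2) ^ n) * p i -
              ((1 / 2 : ℝ) ^ (c k) * (1 - PP S p k / 2) ^ n) / 2 * (p i * ((i (Fin.castSucc k)).natAbs : ℝ))) := by
          apply Finset.sum_congr rfl
          intro i hi
          have : (1 / 2 : ℝ) ^ (i (Fin.castSucc k)).natAbs = 1 - ((i (Fin.castSucc k)).natAbs : ℝ) / 2 := by
            rcases (hstep i hi) (Fin.castSucc k) with h | h | h <;> rw [h] <;> norm_num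
          rw [pow_add, this]
          ring
        _ = ((1 / 2 : ℝ) ^ (c k) * (1 - PP S p k / 2) ^ n) - ((1 / 2 : ℝ) ^ (c k) * (1 - PP S p k / 2) ^ n) / 2 * PP S p k := by
          rw [Finset.sum_sub_distrib, ← Finset.mul_sum, ← Finset.mul_sum, hp1]; simp only [PP, mul_one]
        _ ≤ _ := by
          apply le_of_eq
          generalize PP S p k = P
          ring
    · positivity

lemma zpow_harm (hp1 : ∑ i ∈ S, p i = 1)
    (hstep : ∀ i ∈ S, (∀ j, i j = -1 ∨ i j = 0 ∨ i j = 1)) (r : ℝ) (hr : 0 < r) (z : ℤ) :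
    ∑ i ∈ S, p i * r ^ (z + i (Fin.last d) + 1) = r ^ (z + 1) *
      (1 + (∑ i ∈ S with i (Fin.last d) = 1, p i) * (r - 1) + (∑ i ∈ S with i (Fin.last d) = -1, p i) * (r⁻¹ - 1)) := by
  have e : (1 + (∑ i ∈ S with i (Fin.last d) = 1, p i) * (r - 1) + (∑ i ∈ S with i (Fin.last d) = -1, p i) * (r⁻¹ - 1))
    = ((∑ i ∈ S, p i) + (∑ i ∈ S with i (Fin.last d) = 1, p i) * (r - 1) + (∑ i ∈ S with i (Fin.last d) = -1, p i) * (r⁻¹ - 1)) := by rw [hp1]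
  rw [e, Finset.sum_filter, Finset.sum_filter, Finset.sum_mul, Finset.sum_mul, ← Finset.sum_add_distrib,
    ← Finset.sum_add_distrib, Finset.mul_sum]
  apply Finset.sum_congr rfl
  intro i hi
  rw [show z + i (Fin.last d) + 1 = (z + 1) + i (Fin.last d) by ring, zpow_add₀ hr.ne']
  rcases (hstep i hi) (Fin.last d) with h | h | h <;> rw [h] <;> norm_num <;> ring

/-- hypotheses on the two exponentials -/
lemma Tn_surv (hp : ∀ i ∈ S, 0 ≤ p i) (hp1 : ∑ i ∈ S, p i = 1)
    (hstep : ∀ i ∈ S, (∀ j, i j = -1 ∨ i j = 0 ∨ i j = 1)) (ρ r l : ℝ) (hρ : 0 < ρ) (hρr : ρ ≤ r) (hl : 0 ≤ l)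
    (h1 : ∀ z : ℤ, ∑ i ∈ S, p i * ρ ^ (z + i (Fin.last d) + 1) = ρ ^ (z + 1))
    (h2 : ∀ z : ℤ, ∑ i ∈ S, p i * r ^ (z + i (Fin.last d) + 1) = l * r ^ (z + 1))
    (n : ℕ) (c : Fin d → ℕ) (z : ℤ) (hz : -1 ≤ z) :
    1 - ρ ^ (z + 1) ≤ Tn S p n (fun _ => 1) c z ∧ Tn S p n (fun _ => 1) c z ≤ 1 - ρ ^ (z + 1) + l ^ n * r ^ (z + 1) := by
  have hr : 0 < r := lt_of_lt_of_le hρ hρr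
  have hneg : ∀ n c, 1 - ρ ^ ((-1 : ℤ) + 1) ≤ Tn S p n (fun _ => 1) c (-1) ∧
      Tn S p n (fun _ => 1) c (-1) ≤ 1 - ρ ^ ((-1 : ℤ) + 1) + l ^ n * r ^ ((-1 : ℤ) + 1) := by
    intro n c
    rw [Tn_neg _ _ _ _ _ _ (by norm_num)]
    simp; positivity
  induction n generalizing c z with
  | zero =>
    rcases hz.eq_or_lt with h | h
    · rw [← h]; exact hneg _ _
    have hz0 : 0 ≤ z := by omega
    simp only [Tn, if_pos hz0]
    have : ρ ^ (z + 1) ≤ r ^ (z + 1) := zpow_le_zpow_left₀ (by omega) hρ.le hρr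
    have h0 : 0 < ρ ^ (z + 1) := by positivity
    constructor <;> simp <;> linarith
  | succ n ih =>
    rcases hz.eq_or_lt with h | h
    · rw [← h]; exact hneg _ _
    have hz0 : 0 ≤ z := by omega
    simp only [Tn, if_pos hz0]
    have hi : ∀ i ∈ S, -1 ≤ z + i (Fin.last d) := by
      intro i hi
      rcases (hstep i hi) (Fin.last d) with h | h | h <;> rw [h] <;> omega
    constructor
    · calc _ = ∑ i ∈ S, p i * (1 - ρ ^ (z + i (Fin.last d) + 1)) := by
            simp only [mul_sub, Finset.sum_sub_distrib, h1, mul_one, hp1]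
        _ ≤ _ := Finset.sum_le_sum fun i h => mul_le_mul_of_nonneg_left (ih _ _ (hi i h)).1 (hp i h)
    · calc _ ≤ ∑ i ∈ S, p i * (1 - ρ ^ (z + i (Fin.last d) + 1) + l ^ n * r ^ (z + i (Fin.last d) + 1)) :=
            Finset.sum_le_sum fun i h => mul_le_mul_of_nonneg_left (ih _ _ (hi i h)).2 (hp i h)
        _ = 1 - ρ ^ (z + 1) + l ^ n * (l * r ^ (z + 1)) := by
            have e : 1 - ρ ^ (z + 1) + l ^ n * (l * r ^ (z + 1)) = (∑ i ∈ S, p i) - ρ ^ (z + 1) + l ^ n * (l * r ^ (z + 1)) := by rw [hp1]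
            rw [e, ← h1, ← h2, Finset.mul_sum, ← Finset.sum_sub_distrib, ← Finset.sum_add_distrib]
            apply Finset.sum_congr rfl; intros; ring
        _ = _ := by ring

lemma Tn_lin (hp : ∀ i ∈ S, 0 ≤ p i) (hp1 : ∑ i ∈ S, p i = 1)
    (hstep : ∀ i ∈ S, (∀ j, i j = -1 ∨ i j = 0 ∨ i j = 1)) (hP1 : ∀ k, PP S p k ≤ 1) (hP0 : ∀ k, 0 ≤ PP S p k)
    (ρ r l : ℝ) (hρ : 0 < ρ) (hρ1 : ρ < 1) (hρr : ρ ≤ r) (hl : 0 ≤ l) (hl1 : l < 1)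
    (h1 : ∀ z : ℤ, ∑ i ∈ S, p i * ρ ^ (z + i (Fin.last d) + 1) = ρ ^ (z + 1))
    (h2 : ∀ z : ℤ, ∑ i ∈ S, p i * r ^ (z + i (Fin.last d) + 1) = l * r ^ (z + 1))
    (hq1 : ∀ n z, Tn S p n (fun _ => 1) 0 z ≤ 1)
    (n : ℕ) (k : Fin d) (m : ℝ) (c : Fin d → ℕ) (z : ℤ) (hz : -1 ≤ z) :
    |Tn S p n (fun c => (c k : ℝ) - m) c z - ((c k : ℝ) + n * PP S p k - m) * Tn S p n (fun _ => 1) 0 z|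
      ≤ (1 - l)⁻¹ * r ^ (z + 1) := by
  have hr : 0 < r := lt_of_lt_of_le hρ hρr
  have hl' : 0 < 1 - l := by linarith
  induction n generalizing c z with
  | zero =>
    simp only [Tn]; split_ifs <;> simp <;> positivity
  | succ n ih =>
    by_cases hz0 : 0 ≤ z
    swap
    · rw [Tn_neg _ _ _ _ _ _ (not_le.mp hz0), Tn_neg _ _ _ _ _ _ (not_le.mp hz0)]
      simp; positivity
    have hi : ∀ i ∈ S, -1 ≤ z + i (Fin.last d) := by
      intro i hi
      rcases (hstep i hi) (Fin.last d) with h | h | h <;> rw [h] <;> omega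
    simp only [Tn, if_pos hz0]
    simp only [Tn_one S p n (fun k => _ + _)]
    have e : ∑ i ∈ S, p i * Tn S p n (fun c => (c k : ℝ) - m) (fun k => c k + (i (Fin.castSucc k)).natAbs) (z + i (Fin.last d))
        - ((c k : ℝ) + (n + 1 : ℕ) * PP S p k - m) * ∑ i ∈ S, p i * Tn S p n (fun _ => 1) 0 (z + i (Fin.last d))
        = ∑ i ∈ S, p i * ((Tn S p n (fun c => (c k : ℝ) - m) (fun k => c k + (i (Fin.castSucc k)).natAbs) (z + i (Fin.last d))
            - (((c k + (i (Fin.castSucc k)).natAbs : ℕ) : ℝ) + n * PP S p k - m) * Tn S p n (fun _ => 1) 0 (z + i (Fin.last d)))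
            + (((i (Fin.castSucc k)).natAbs : ℝ) - PP S p k) * (Tn S p n (fun _ => 1) 0 (z + i (Fin.last d)) - 1)) := by
      have e0 : ∑ i ∈ S, p i * (((i (Fin.castSucc k)).natAbs : ℝ) - PP S p k) = 0 := by
        simp only [mul_sub, Finset.sum_sub_distrib, ← Finset.sum_mul, hp1]
        simp [PP]
      rw [← sub_eq_zero, Finset.mul_sum, ← Finset.sum_sub_distrib, ← Finset.sum_sub_distrib, ← e0]
      apply Finset.sum_congr rfl
      intro i _
      push_cast
      ring
    rw [e]
    calc _ ≤ ∑ i ∈ S, |_| := Finset.abs_sum_le_sum_abs _ _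
      _ ≤ ∑ i ∈ S, p i * ((1 - l)⁻¹ * r ^ (z + i (Fin.last d) + 1) + ρ ^ (z + i (Fin.last d) + 1)) := by
        apply Finset.sum_le_sum
        intro i his
        rw [abs_mul, abs_of_nonneg (hp i his)]
        apply mul_le_mul_of_nonneg_left _ (hp i his)
        refine (abs_add_le _ _).trans (add_le_add (ih _ _ (hi i his)) ?_)
        rw [abs_mul]
        have b1 : |((i (Fin.castSucc k)).natAbs : ℝ) - PP S p k| ≤ 1 := by
          have := hP1 k
          have := hP0 k
          rw [abs_le]
          rcases (hstep i his) (Fin.castSucc k) with h | h | h <;> rw [h] <;> norm_num <;> constructor <;> linarith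
        have b2 : |Tn S p n (fun _ => 1) 0 (z + i (Fin.last d)) - 1| ≤ ρ ^ (z + i (Fin.last d) + 1) := by
          have := (Tn_surv S p hp hp1 hstep ρ r l hρ hρr hl h1 h2 n 0 _ (hi i his)).1
          have := hq1 n (z + i (Fin.last d))
          rw [abs_le]; constructor <;> linarith [show 0 < ρ ^ (z + i (Fin.last d) + 1) by positivity]
        calc _ ≤ 1 * ρ ^ (z + i (Fin.last d) + 1) := mul_le_mul b1 b2 (abs_nonneg _) zero_le_one
          _ = _ := one_mul _
      _ = (1 - l)⁻¹ * (l * r ^ (z + 1)) + ρ ^ (z + 1) := by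
        rw [← h1, ← h2, Finset.mul_sum, ← Finset.sum_add_distrib]
        apply Finset.sum_congr rfl; intros; ring
      _ ≤ (1 - l)⁻¹ * (l * r ^ (z + 1)) + r ^ (z + 1) := by
        gcongr; exact zpow_le_zpow_left₀ (by omega) hρ.le hρr
      _ = _ := by field_simp; ring

lemma Tn_le_one (hp : ∀ i ∈ S, 0 ≤ p i) (hp1 : ∑ i ∈ S, p i = 1) (n : ℕ) (c : Fin d → ℕ) (z : ℤ) :
    Tn S p n (fun _ => 1) c z ≤ 1 := by
  induction n generalizing c z with
  | zero => simp only [Tn]; split_ifs <;> simp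
  | succ n ih =>
    simp only [Tn]; split_ifs
    · refine le_of_le_of_eq ?_ hp1
      exact Finset.sum_le_sum fun i hi => mul_le_of_le_one_right (hp i hi) (ih _ _)
    · simp

end Tops

/-- walks from a general starting point -/
def WF {D : ℕ} (S : Finset (Fin D → ℤ)) (w : (Fin D → ℤ) → ℝ) (n : ℕ) (x : Fin D → ℤ) : ℝ :=
  ∑ f : Fin n → {i // i ∈ S},
    if ∀ m : ℕ, m ≤ n → ∀ j : Fin D,
        0 ≤ x j + ∑ k ∈ Finset.univ.filter (fun k : Fin n => (k : ℕ) < m), ((f k : Fin D → ℤ) j)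
    then ∏ k : Fin n, w (f k) else 0

lemma WF_zero {D : ℕ} (S : Finset (Fin D → ℤ)) (w : (Fin D → ℤ) → ℝ) (x : Fin D → ℤ) :
    WF S w 0 x = if ∀ j, 0 ≤ x j then 1 else 0 := by
  unfold WF
  simp

lemma WF_succ {D : ℕ} (S : Finset (Fin D → ℤ)) (w : (Fin D → ℤ) → ℝ) (n : ℕ) (x : Fin D → ℤ) :
    WF S w (n + 1) x = if ∀ j, 0 ≤ x j then ∑ i ∈ S, w i * WF S w n (fun j => x j + i j) else 0 := by
  unfold WF
  rw [← (Fin.consEquiv (fun _ : Fin (n + 1) => {i // i ∈ S})).sum_comp, Fintype.sum_prod_type]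
  have key : ∀ (i : {i // i ∈ S}) (f : Fin n → {i // i ∈ S}),
     (∀ m : ℕ, m ≤ n + 1 → ∀ j : Fin D,
        0 ≤ x j + ∑ k ∈ Finset.univ.filter (fun k : Fin (n + 1) => (k : ℕ) < m),
          (((Fin.cons i f : Fin (n + 1) → {i // i ∈ S}) k : Fin D → ℤ) j)) ↔
      ((∀ j, 0 ≤ x j) ∧ ∀ m : ℕ, m ≤ n → ∀ j : Fin D,
        0 ≤ (x j + i.1 j) + ∑ k ∈ Finset.univ.filter (fun k : Fin n => (k : ℕ) < m), ((f k : Fin D → ℤ) j)) := by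
    intro i f
    have hs : ∀ m : ℕ, ∀ j, ∑ k ∈ Finset.univ.filter (fun k : Fin (n + 1) => (k : ℕ) < m + 1),
          (((Fin.cons i f : Fin (n + 1) → {i // i ∈ S}) k : Fin D → ℤ) j) =
          i.1 j + ∑ k ∈ Finset.univ.filter (fun k : Fin n => (k : ℕ) < m), ((f k : Fin D → ℤ) j) := by
      intro m j
      rw [Finset.sum_filter, Fin.sum_univ_succ, Finset.sum_filter]
      simp
    constructor
    · intro h
      refine ⟨fun j => by simpa using h 0 (by omega) j, fun m hm j => ?_⟩
      have := h (m + 1) (by omega) j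
      rw [hs] at this
      linarith
    · rintro ⟨h0, h⟩ m hm j
      cases m with
      | zero => simpa using h0 j
      | succ m =>
        rw [hs]
        have := h m (by omega) j
        linarith
  split_ifs with hx
  · rw [← Finset.sum_coe_sort S (fun i => w i * _)]
    apply Finset.sum_congr rfl
    intro i _
    rw [Finset.mul_sum]
    apply Finset.sum_congr rfl
    intro f _
    simp only [Fin.consEquiv_apply]
    rw [mul_ite, mul_zero]
    simp only [key i f, hx, Fin.prod_univ_succ, Fin.cons_zero, Fin.cons_succ]
    simp
  · apply Finset.sum_eq_zero
    intro i _
    apply Finset.sum_eq_zero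
    intro f _
    rw [if_neg]
    simp only [Fin.consEquiv_apply]
    rw [key i f]
    tauto

lemma walkWeight_eq {D : ℕ} (S : Finset (Fin D → ℤ)) (w : (Fin D → ℤ) → ℝ) (n : ℕ) :
    walkWeight D S w n = WF S w n 0 := by
  unfold walkWeight WF
  simp

lemma walkWeight_scale {D : ℕ} (S : Finset (Fin D → ℤ)) (w : (Fin D → ℤ) → ℝ) (a : ℝ) (n : ℕ) :
    walkWeight D S (fun i => a * w i) n = a ^ n * walkWeight D S w n := by
  unfold walkWeight
  rw [Finset.mul_sum]
  apply Finset.sum_congr rfl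
  intro f _
  simp [Finset.prod_mul_distrib]

lemma symm_sum {D : ℕ} (S : Finset (Fin D → ℤ)) (p : (Fin D → ℤ) → ℝ) (k : Fin D)
    (h : SymmetricAxis D S p k) (G : (Fin D → ℤ) → ℝ) :
    ∑ i ∈ S, p i * G i = ∑ i ∈ S, p i * G (Function.update i k (-(i k))) := by
  apply Finset.sum_nbij' (fun i => Function.update i k (-(i k))) (fun i => Function.update i k (-(i k)))
  · intro i hi; exact (h i hi).1
  · intro i hi; exact (h i hi).1
  · intro i hi; simp
  · intro i hi; simp
  · intro i hi; simp [(h i hi).2]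

lemma hh_step (c : ℕ) (y s : ℤ) (hy : 0 ≤ y) (hs : s = -1 ∨ s = 0 ∨ s = 1) :
    hh c (y + s) + hh c (y - s) = 2 * hh (c + s.natAbs) y := by
  rcases hs with h | h | h <;> subst h
  · simp [hh_succ c y hy]; ring_nf
  · simp; ring
  · simp [hh_succ c y hy]

lemma WF_eq {d : ℕ} (S : Finset (Fin (d + 1) → ℤ)) (p : (Fin (d + 1) → ℤ) → ℝ)
    (hstep : ∀ i ∈ S, (∀ j, i j = -1 ∨ i j = 0 ∨ i j = 1))
    (hsym : ∀ k : Fin d, SymmetricAxis (d + 1) S p (Fin.castSucc k)) (n : ℕ) (x : Fin (d + 1) → ℤ) :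
    WF S p n x = Tn S p n (fun c => ∏ k, hh (c k) (x (Fin.castSucc k))) 0 (x (Fin.last d)) := by
  have neg : ∀ n, ∀ x : Fin (d + 1) → ℤ, (¬ ∀ j, 0 ≤ x j) →
      Tn S p n (fun c => ∏ k, hh (c k) (x (Fin.castSucc k))) 0 (x (Fin.last d)) = 0 := by
    intro n x hx
    push Not at hx
    obtain ⟨j, hj⟩ := hx
    induction j using Fin.lastCases with
    | last => exact Tn_neg _ _ _ _ _ _ hj
    | cast k =>
      have : (fun c : Fin d → ℕ => ∏ k, hh (c k) (x (Fin.castSucc k))) = fun c => 0 * 1 := by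
        funext c
        rw [zero_mul]
        exact Finset.prod_eq_zero (Finset.mem_univ k) (hh_neg _ _ hj)
      rw [this, Tn_smul, zero_mul]
  induction n generalizing x with
  | zero =>
    rw [WF_zero]
    split_ifs with hx
    · simp only [Tn, if_pos (hx _)]
      symm
      apply Finset.prod_eq_one
      intro k _
      exact hh_zero _ (hx _)
    · exact (neg 0 x hx).symm
  | succ n ih =>
    rw [WF_succ]
    split_ifs with hx
    swap
    · exact (neg _ x hx).symm
    simp only [Tn, if_pos (hx _)]
    simp only [ih]
    have key : ∀ T : Finset (Fin d), ∑ i ∈ S, p i * Tn S p n (fun c => ∏ k, hh (c k) (x (Fin.castSucc k) + i (Fin.castSucc k))) 0 (x (Fin.last d) + i (Fin.last d))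
       = ∑ i ∈ S, p i * Tn S p n (fun c => ∏ k, if k ∈ T then hh (c k + (i (Fin.castSucc k)).natAbs) (x (Fin.castSucc k)) else
           hh (c k) (x (Fin.castSucc k) + i (Fin.castSucc k))) 0 (x (Fin.last d) + i (Fin.last d)) := by
      intro T
      induction T using Finset.induction_on with
      | empty => simp
      | insert k T hk ihT =>
        rw [ihT]
        have h1 := symm_sum S p _ (hsym k) (fun i => Tn S p n (fun c => ∏ k, if k ∈ T then hh (c k + (i (Fin.castSucc k)).natAbs) (x (Fin.castSucc k)) else
           hh (c k) (x (Fin.castSucc k) + i (Fin.castSucc k))) 0 (x (Fin.last d) + i (Fin.last d)))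
        suffices h2 : ∀ a b c : ℝ, a = b → a + b = 2 * c → a = c from by
          refine h2 _ _ _ h1 ?_
          rw [← Finset.sum_add_distrib, Finset.mul_sum]
          apply Finset.sum_congr rfl
          intro i hi
          rw [← mul_add, mul_left_comm]
          congr 1
          have hl : Function.update i (Fin.castSucc k) (-(i (Fin.castSucc k))) (Fin.last d) = i (Fin.last d) := by
            rw [Function.update_of_ne]
            exact (Fin.castSucc_lt_last k).ne'
          rw [hl, ← Tn_add, ← Tn_smul]
          congr 1
          funext c
          rw [← Finset.mul_prod_erase _ _ (Finset.mem_univ k), ← Finset.mul_prod_erase _ _ (Finset.mem_univ k),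
            ← Finset.mul_prod_erase _ _ (Finset.mem_univ k)]
          have e1 : ∀ j ∈ Finset.univ.erase k, (if j ∈ T then hh (c j + (Function.update i (Fin.castSucc k) (-(i (Fin.castSucc k))) (Fin.castSucc j)).natAbs) (x (Fin.castSucc j)) else
             hh (c j) (x (Fin.castSucc j) + Function.update i (Fin.castSucc k) (-(i (Fin.castSucc k))) (Fin.castSucc j)))
             = (if j ∈ T then hh (c j + (i (Fin.castSucc j)).natAbs) (x (Fin.castSucc j)) else
           hh (c j) (x (Fin.castSucc j) + i (Fin.castSucc j))) := by
            intro j hj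
            have hj' : j ≠ k := Finset.ne_of_mem_erase hj
            rw [Function.update_of_ne]
            exact fun h => hj' (Fin.castSucc_injective _ h)
          have e2 : ∀ j ∈ Finset.univ.erase k, (if j ∈ insert k T then hh (c j + (i (Fin.castSucc j)).natAbs) (x (Fin.castSucc j)) else
           hh (c j) (x (Fin.castSucc j) + i (Fin.castSucc j)))
             = (if j ∈ T then hh (c j + (i (Fin.castSucc j)).natAbs) (x (Fin.castSucc j)) else
           hh (c j) (x (Fin.castSucc j) + i (Fin.castSucc j))) := by
            intro j hj
            have hj' : j ≠ k := Finset.ne_of_mem_erase hj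
            simp [hj']
          rw [Finset.prod_congr rfl e1, Finset.prod_congr rfl e2, ← add_mul, ← mul_assoc]
          congr 1
          rw [if_neg hk, if_neg hk, if_pos (Finset.mem_insert_self _ _), Function.update_self]
          exact hh_step _ _ _ (hx _) (hstep i hi _)
        intro a b c h h'
        linarith
    rw [key Finset.univ]
    apply Finset.sum_congr rfl
    intro i _
    rw [Tn_shift]
    simp

lemma prod_approx {ι : Type*} (M : ℝ) (C : ι → ℝ) (s : Finset ι) :
    ∃ C' : ℝ, 0 ≤ C' ∧ ∀ (u δ : ι → ℝ) (e : ℝ), 0 ≤ e →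
      (∀ k ∈ s, |u k| ≤ M ∧ (u k - 1) ^ 2 ≤ C k * e ∧ |u k - 1 + δ k| ≤ C k * e) →
      |∏ k ∈ s, u k| ≤ C' ∧ (∏ k ∈ s, u k - 1) ^ 2 ≤ C' * e ∧ |∏ k ∈ s, u k - 1 + ∑ k ∈ s, δ k| ≤ C' * e := by
  induction s using Finset.induction_on with
  | empty =>
    refine ⟨1, zero_le_one, ?_⟩
    intro u δ e he _
    simp [he]
  | insert a s ha ih =>
    obtain ⟨C', hC', h⟩ := ih
    refine ⟨|M| * C' + (2 * C' ^ 2 * |C a| + 2 * C') + (C' + |C a| + C' + |C a|), by positivity, ?_⟩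
    intro u δ e he hs
    obtain ⟨h1, h2, h3⟩ := h u δ e he (fun k hk => hs k (Finset.mem_insert_of_mem hk))
    obtain ⟨g1, g2, g3⟩ := hs a (Finset.mem_insert_self _ _)
    rw [Finset.prod_insert ha, Finset.sum_insert ha]
    set X := ∏ k ∈ s, u k
    set D := ∑ k ∈ s, δ k
    have hCa : C a * e ≤ |C a| * e := mul_le_mul_of_nonneg_right (le_abs_self _) he
    have t1 : 0 ≤ |M| * C' := by positivity
    have t2 : 0 ≤ (2 * C' ^ 2 * |C a| + 2 * C') := by positivity
    have t3 : 0 ≤ (C' + |C a| + C' + |C a|) := by positivity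
    refine ⟨?_, ?_, ?_⟩
    · rw [abs_mul]
      have : |u a| * |X| ≤ |M| * C' := mul_le_mul (g1.trans (le_abs_self _)) h1 (abs_nonneg _) (abs_nonneg _)
      linarith
    · have hX : X ^ 2 ≤ C' ^ 2 := by rw [← sq_abs X]; gcongr
      have : (u a * X - 1) ^ 2 ≤ 2 * (X ^ 2 * (u a - 1) ^ 2) + 2 * (X - 1) ^ 2 := by
        nlinarith [sq_nonneg (X * (u a - 1) - (X - 1))]
      have h4 : X ^ 2 * (u a - 1) ^ 2 ≤ C' ^ 2 * (|C a| * e) :=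
        mul_le_mul hX (g2.trans hCa) (sq_nonneg _) (sq_nonneg _)
      have := mul_nonneg t1 he
      have := mul_nonneg t3 he
      nlinarith
    · have e1 : u a * X - 1 + (δ a + D) = (X - 1) * (u a - 1) + (X - 1 + D) + (u a - 1 + δ a) := by ring
      have e2 : |(X - 1) * (u a - 1)| ≤ C' * e + |C a| * e := by
        rw [abs_le]; constructor <;> nlinarith [sq_nonneg ((X - 1) - (u a - 1)), sq_nonneg ((X - 1) + (u a - 1))]
      rw [e1]
      have e3 := abs_add_three ((X - 1) * (u a - 1)) (X - 1 + D) (u a - 1 + δ a)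
      have := mul_nonneg t1 he
      have := mul_nonneg t2 he
      nlinarith

lemma single_approx (c n : ℕ) (hn : 1 ≤ n) (P : ℝ) (hP : 0 < P) (hP1 : P ≤ 1) (hc : (n : ℝ) * P / 2 ≤ c)
    (e : ℝ) (he : 1 / (n : ℝ) + (((c : ℝ) - n * P) / (n * P)) ^ 2 ≤ e) :
    |hh c 0 * Real.sqrt (Real.pi * (n * P) / 2)| ≤ 2 ∧
    (hh c 0 * Real.sqrt (Real.pi * (n * P) / 2) - 1) ^ 2 ≤ 32 / P * e ∧
    |hh c 0 * Real.sqrt (Real.pi * (n * P) / 2) - 1 + ((c : ℝ) - n * P) / (n * P) / 2| ≤ 32 / P * e := by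
  have hn' : (1:ℝ) ≤ n := by exact_mod_cast hn
  have hn0 : (0:ℝ) < n := by linarith
  have hpi := Real.pi_pos
  set y := (n : ℝ) * P with hy
  have hy0 : 0 < y := by positivity
  have hc0 : (0:ℝ) < c := by linarith
  have hc1 : 1 ≤ c := by exact_mod_cast hc0
  obtain ⟨hv1, hv2⟩ := hh_bound c hc1
  set δ := ((c : ℝ) - y) / y with hδ
  set u := hh c 0 * Real.sqrt (Real.pi * y / 2) with hu
  set v := hh c 0 ^ 2 * (Real.pi * c / 2) with hv
  have hu0 : 0 ≤ u := mul_nonneg (hh_nonneg c) (Real.sqrt_nonneg _)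
  have hv0 : 0 ≤ v := by positivity
  have ht : (c : ℝ) = y * (1 + δ) := by rw [hδ]; field_simp; ring
  have ht2 : 1 / 2 ≤ 1 + δ := by
    by_contra hcon
    push Not at hcon
    nlinarith
  have hu2 : u ^ 2 * (1 + δ) = v := by
    rw [hu, mul_pow, Real.sq_sqrt (by positivity), hv, ht]; ring
  have hcb : 2 / (c : ℝ) ≤ 4 / P * (1 / n) := by
    rw [div_mul_div_comm, div_le_div_iff₀ hc0 (by positivity)]
    nlinarith
  have hw : 1 - v ≤ 4 / P * (1 / n) := by linarith
  have hPi : 1 ≤ 1 / P := by rw [le_div_iff₀ hP]; linarith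
  set q := 1 / P with hq
  set η := 1 / (n : ℝ) with hη
  have hη0 : 0 < η := by positivity
  rw [show 4 / P = 4 * q by rw [hq]; ring] at hw
  rw [show 32 / P = 32 * q by rw [hq]; ring]
  clear_value u v δ q η
  have hd : 0 ≤ δ ^ 2 := sq_nonneg _
  have hee : q * (η + δ ^ 2) ≤ q * e := by gcongr
  have hqd : δ ^ 2 ≤ q * δ ^ 2 := le_mul_of_one_le_left hd hPi
  have hqη : 0 ≤ q * η := by positivity
  have hqe : 0 ≤ q * e := by linarith
  -- second
  have hsq : (u ^ 2 - 1) ^ 2 ≤ 32 * q * (η + δ ^ 2) := by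
    have h1 : (u ^ 2 - 1) * (1 + δ) = v - 1 - δ := by linarith
    have h2 : (u ^ 2 - 1) ^ 2 * (1 + δ) ^ 2 = (v - 1 - δ) ^ 2 := by rw [← h1]; ring
    have h3 : (1 / 4 : ℝ) ≤ (1 + δ) ^ 2 := by
      have := pow_le_pow_left₀ (by norm_num) ht2 2
      linarith
    have h4 : (u ^ 2 - 1) ^ 2 * (1 / 4) ≤ (v - 1 - δ) ^ 2 := by
      rw [← h2]; gcongr
    have h5 : (v - 1 - δ) ^ 2 ≤ 2 * (1 - v) ^ 2 + 2 * δ ^ 2 := by nlinarith [sq_nonneg (v - 1 + δ)]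
    have h6 : (1 - v) ^ 2 ≤ 1 - v := by
      rw [sq]; exact mul_le_of_le_one_left (by linarith) (by linarith)
    linarith
  have hs2 : (u - 1) ^ 2 ≤ (u ^ 2 - 1) ^ 2 := by
    have : (u ^ 2 - 1) ^ 2 = (u - 1) ^ 2 * (u + 1) ^ 2 := by ring
    rw [this]
    exact le_mul_of_one_le_right (sq_nonneg _) (one_le_pow₀ (by linarith))
  refine ⟨?_, ?_, ?_⟩
  · rw [abs_of_nonneg hu0]
    have : u ^ 2 * (1 / 2) ≤ u ^ 2 * (1 + δ) := by gcongr
    nlinarith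
  · linarith
  · have h1 : (u ^ 2 - 1 + δ) * (1 + δ) = v - 1 + δ ^ 2 := by linear_combination hu2
    have h2 : |u ^ 2 - 1 + δ| * (1 / 2) ≤ |v - 1 + δ ^ 2| := by
      rw [← h1, abs_mul, abs_of_pos (by linarith : 0 < 1 + δ)]; gcongr
    have h3 : |v - 1 + δ ^ 2| ≤ 4 * q * (η + δ ^ 2) := by
      rw [abs_le]; constructor <;> linarith
    have h4 : u - 1 + δ / 2 = (u ^ 2 - 1 + δ) / 2 - (u - 1) ^ 2 / 2 := by ring
    rw [h4]
    have h6 : |u ^ 2 - 1 + δ| ≤ 8 * q * (η + δ ^ 2) := by linarith [h2.trans h3]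
    have h7 := abs_le.mp h6
    have h8 := sq_nonneg (u - 1)
    rw [abs_le]; constructor <;> linarith

lemma rpow_neg_half (d n : ℕ) : (n : ℝ) ^ (-(d : ℝ) / 2) = (Real.sqrt n ^ d)⁻¹ := by
  rw [neg_div, Real.rpow_neg (by positivity), Real.sqrt_eq_rpow, ← Real.rpow_natCast, ← Real.rpow_mul (by positivity)]
  congr 2; ring

lemma pointwise (d : ℕ) (P : Fin d → ℝ) (hP : ∀ k, 0 < P k) (hP1 : ∀ k, P k ≤ 1) :
    ∃ C : ℝ, 0 ≤ C ∧ ∀ n : ℕ, 1 ≤ n → ∀ c : Fin d → ℕ,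
      |∏ k, hh (c k) 0 - (∏ k, (Real.sqrt (Real.pi * P k / 2))⁻¹) * (n : ℝ) ^ (-(d : ℝ) / 2) *
          (1 - ∑ k, ((c k : ℝ) - n * P k) / (n * P k) / 2)| ≤
        C * (n : ℝ) ^ (-(d : ℝ) / 2) * (1 / n + ∑ k, (((c k : ℝ) - n * P k) / (n * P k)) ^ 2)
        + C * ∑ k, ((2 : ℝ) ^ (P k / 2)) ^ n * (1 / 2 : ℝ) ^ (c k) := by
  obtain ⟨C', hC', h⟩ := prod_approx 2 (fun k => 32 / P k) (Finset.univ : Finset (Fin d))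
  set K := ∏ k, (Real.sqrt (Real.pi * P k / 2))⁻¹ with hK
  have hpi := Real.pi_pos
  have hK0 : 0 < K := Finset.prod_pos fun k _ => inv_pos.mpr (Real.sqrt_pos.mpr (by have := hP k; positivity))
  refine ⟨K * C' + 1 + K * (1 + d), by positivity, ?_⟩
  intro n hn c
  have hn' : (1:ℝ) ≤ n := by exact_mod_cast hn
  have hn0 : (0:ℝ) < n := by linarith
  set N := (n : ℝ) ^ (-(d : ℝ) / 2) with hN
  have hN0 : 0 < N := by positivity
  have hN1 : N ≤ 1 := Real.rpow_le_one_of_one_le_of_nonpos hn' (by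
    have : (0:ℝ) ≤ d := Nat.cast_nonneg d
    linarith)
  set δ : Fin d → ℝ := fun k => ((c k : ℝ) - n * P k) / (n * P k) with hδ
  set E := ∑ k, ((2 : ℝ) ^ (P k / 2)) ^ n * (1 / 2 : ℝ) ^ (c k) with hE
  have hE0 : ∀ k, 0 ≤ ((2 : ℝ) ^ (P k / 2)) ^ n * (1 / 2 : ℝ) ^ (c k) := fun k => by positivity
  have hE1 : 0 ≤ E := Finset.sum_nonneg fun k _ => hE0 k
  have hsum0 : 0 ≤ ∑ k, δ k ^ 2 := Finset.sum_nonneg fun k _ => sq_nonneg _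
  have hη : 0 < 1 / (n : ℝ) := by positivity
  change |∏ k, hh (c k) 0 - K * N * (1 - ∑ k, δ k / 2)| ≤ (K * C' + 1 + K * (1 + d)) * N * (1 / n + ∑ k, δ k ^ 2) + (K * C' + 1 + K * (1 + d)) * E
  by_cases hgood : ∀ k, (n : ℝ) * P k / 2 ≤ c k
  · have h1 := h (fun k => hh (c k) 0 * Real.sqrt (Real.pi * (n * P k) / 2)) (fun k => δ k / 2)
      (1 / n + ∑ k, δ k ^ 2) (by positivity) (fun k _ => single_approx (c k) n hn (P k) (hP k) (hP1 k) (hgood k) _ (by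
        gcongr
        exact Finset.single_le_sum (f := fun k => δ k ^ 2) (fun k _ => sq_nonneg _) (Finset.mem_univ k)))
    obtain ⟨_, _, h2⟩ := h1
    have e1 : ∏ k, hh (c k) 0 = K * N * ∏ k, (hh (c k) 0 * Real.sqrt (Real.pi * (n * P k) / 2)) := by
      rw [hN, rpow_neg_half, Finset.prod_mul_distrib, hK]
      have : ∀ k, Real.sqrt (Real.pi * (n * P k) / 2) = Real.sqrt n * Real.sqrt (Real.pi * P k / 2) := by
        intro k
        rw [← Real.sqrt_mul (by positivity)]
        congr 1; ring
      simp only [this, Finset.prod_mul_distrib, Finset.prod_const, Finset.card_univ, Fintype.card_fin]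
      have a1 : Real.sqrt n ^ d ≠ 0 := by positivity
      rw [Finset.prod_inv_distrib] at hK ⊢
      have a2 : ∏ k, Real.sqrt (Real.pi * P k / 2) ≠ 0 := by
        intro h0
        rw [h0] at hK
        simp at hK
        exact hK0.ne' hK
      field_simp
    rw [e1, ← mul_sub, abs_mul, abs_of_pos (by positivity : 0 < K * N)]
    rw [show (∏ k, (hh (c k) 0 * Real.sqrt (Real.pi * (n * P k) / 2))) - (1 - ∑ k, δ k / 2) =
      ∏ k, (hh (c k) 0 * Real.sqrt (Real.pi * (n * P k) / 2)) - 1 + ∑ k, δ k / 2 by ring]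
    calc _ ≤ K * N * (C' * (1 / n + ∑ k, δ k ^ 2)) := by gcongr
      _ = K * C' * N * (1 / n + ∑ k, δ k ^ 2) + 0 := by ring
      _ ≤ _ := by
        gcongr
        · have : 0 ≤ K * (1 + d) := by positivity
          linarith
        · positivity
  · push Not at hgood
    obtain ⟨k, hk⟩ := hgood
    have hE2 : 1 ≤ E := by
      refine le_trans ?_ (Finset.single_le_sum (f := fun k => ((2 : ℝ) ^ (P k / 2)) ^ n * (1 / 2 : ℝ) ^ (c k)) (fun k _ => hE0 k) (Finset.mem_univ k))
      rw [← Real.rpow_natCast, ← Real.rpow_mul (by norm_num), one_div, inv_pow, ← Real.rpow_natCast 2 (c k), ← Real.rpow_neg (by norm_num),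
        ← Real.rpow_add (by norm_num)]
      apply Real.one_le_rpow (by norm_num)
      linarith
    have b1 : |∏ k, hh (c k) 0| ≤ 1 := by
      rw [abs_of_nonneg (Finset.prod_nonneg fun k _ => hh_nonneg _)]
      exact Finset.prod_le_one (fun k _ => hh_nonneg _) (fun k _ => hh_le_one _)
    have b2 : |1 - ∑ k, δ k / 2| ≤ 1 + d + ∑ k, δ k ^ 2 := by
      have : |∑ k, δ k / 2| ≤ ∑ k : Fin d, (1 + δ k ^ 2) := by
        refine (Finset.abs_sum_le_sum_abs _ _).trans (Finset.sum_le_sum fun k _ => ?_)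
        rw [abs_le]; constructor <;> nlinarith [sq_nonneg (δ k - 1), sq_nonneg (δ k + 1)]
      rw [Finset.sum_add_distrib] at this
      simp only [Finset.sum_const, Finset.card_univ, Fintype.card_fin, nsmul_eq_mul, mul_one] at this
      have := abs_sub (1:ℝ) (∑ k, δ k / 2)
      rw [abs_one] at this
      linarith
    have b3 : |∏ k, hh (c k) 0 - K * N * (1 - ∑ k, δ k / 2)| ≤ 1 + K * N * (1 + d + ∑ k, δ k ^ 2) := by
      refine (abs_sub _ _).trans (add_le_add b1 ?_)
      rw [abs_mul, abs_of_pos (by positivity : 0 < K * N)]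
      gcongr
    refine b3.trans ?_
    have c1 : K * N * (∑ k, δ k ^ 2) ≤ (K * C' + 1 + K * (1 + d)) * N * (1 / n + ∑ k, δ k ^ 2) := by
      gcongr
      · have : 0 ≤ K * d := by positivity
        have : 0 ≤ K * C' := by positivity
        linarith
      · linarith
    have c2 : 1 + K * N * (1 + d) ≤ (K * C' + 1 + K * (1 + d)) * E := by
      calc _ ≤ 1 + K * 1 * (1 + d) := by gcongr
        _ ≤ (K * C' + 1 + K * (1 + d)) * 1 := by
          have : 0 ≤ K * C' := by positivity
          linarith
        _ ≤ _ := by gcongr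
    linarith

lemma geom_bound (d : ℕ) (γ : ℝ) (h0 : 0 ≤ γ) (h1 : γ < 1) :
    ∃ G : ℝ, 0 ≤ G ∧ ∀ n : ℕ, 1 ≤ n → γ ^ n ≤ G * ((n : ℝ) ^ (-(d : ℝ) / 2) / n) := by
  have ht := tendsto_pow_const_mul_const_pow_of_abs_lt_one (d + 1) (show |γ| < 1 by rwa [abs_of_nonneg h0])
  obtain ⟨G, hG⟩ := ht.bddAbove_range
  refine ⟨max G 0, le_max_right _ _, ?_⟩
  intro n hn
  have hn' : (1:ℝ) ≤ n := by exact_mod_cast hn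
  have hn0 : (0:ℝ) < n := by linarith
  have h2 : (n : ℝ) ^ (d + 1) * γ ^ n ≤ max G 0 := (hG ⟨n, rfl⟩).trans (le_max_left _ _)
  rw [rpow_neg_half]
  have hs1 : Real.sqrt n ≤ n := Real.sqrt_le_iff.mpr ⟨by linarith, by nlinarith⟩
  have hs0 : 0 < Real.sqrt n := Real.sqrt_pos.mpr hn0
  calc γ ^ n ≤ max G 0 / (n : ℝ) ^ (d + 1) := by
        rw [le_div_iff₀ (by positivity)]; linarith
    _ ≤ max G 0 / (Real.sqrt n ^ d * n) := by
        rw [pow_succ]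
        gcongr
    _ = _ := by rw [div_eq_mul_inv, mul_inv]; rfl

lemma PP_eq {d : ℕ} (S : Finset (Fin (d + 1) → ℤ)) (p : (Fin (d + 1) → ℤ) → ℝ)
    (hstep : ∀ i ∈ S, (∀ j, i j = -1 ∨ i j = 0 ∨ i j = 1))
    (hsym : ∀ k : Fin d, SymmetricAxis (d + 1) S p (Fin.castSucc k)) (k : Fin d) :
    PP S p k = 2 * ∑ i ∈ S with i (Fin.castSucc k) = 1, p i := by
  have h := symm_sum S p _ (hsym k) (fun i => if i (Fin.castSucc k) = 1 then 1 else 0)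
  simp only [mul_ite, mul_one, mul_zero, Function.update_self] at h
  rw [two_mul, Finset.sum_filter]
  nth_rewrite 2 [h]
  rw [← Finset.sum_add_distrib]
  unfold PP
  apply Finset.sum_congr rfl
  intro i hi
  rcases (hstep i hi) (Fin.castSucc k) with h | h | h <;> rw [h] <;> norm_num

set_option maxHeartbeats 2000000 in
lemma core {d : ℕ} (S : Finset (Fin (d + 1) → ℤ)) (p : (Fin (d + 1) → ℤ) → ℝ)
    (hstep : ∀ i ∈ S, (∀ j, i j = -1 ∨ i j = 0 ∨ i j = 1))
    (hp' : ∀ i ∈ S, 0 < p i) (hp1 : ∑ i ∈ S, p i = 1)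
    (hsym : ∀ k : Fin d, SymmetricAxis (d + 1) S p (Fin.castSucc k))
    (hfwd : ∀ k : Fin (d + 1), ∃ i ∈ S, i k = 1)
    (hbwd : ∀ k : Fin (d + 1), ∃ i ∈ S, i k = -1)
    (a b : ℝ) (ha : a = ∑ i ∈ S with i (Fin.last d) = -1, p i) (hb : b = ∑ i ∈ S with i (Fin.last d) = 1, p i)
    (hab : a < b) :
    ∃ C : ℝ, ∀ n : ℕ, 1 ≤ n →
      |walkWeight (d + 1) S p n - (n : ℝ) ^ (-(d : ℝ) / 2) * ((∏ k, (Real.sqrt (Real.pi * PP S p k / 2))⁻¹) * (1 - a / b))|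
        ≤ C * ((n : ℝ) ^ (-(d : ℝ) / 2) / n) := by
  have hp : ∀ i ∈ S, 0 ≤ p i := fun i hi => (hp' i hi).le
  have hpi := Real.pi_pos
  have hP0 : ∀ k, 0 < PP S p k := by
    intro k
    rw [PP_eq S p hstep hsym k]
    obtain ⟨i, hi, hik⟩ := hfwd (Fin.castSucc k)
    have : 0 < ∑ i ∈ S with i (Fin.castSucc k) = 1, p i :=
      Finset.sum_pos (fun i hi => hp' i (Finset.mem_filter.mp hi).1) ⟨i, Finset.mem_filter.mpr ⟨hi, hik⟩⟩
    linarith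
  have hP1 : ∀ k, PP S p k ≤ 1 := by
    intro k
    rw [← hp1]
    unfold PP
    apply Finset.sum_le_sum
    intro i hi
    apply mul_le_of_le_one_right (hp i hi)
    rcases (hstep i hi) (Fin.castSucc k) with h | h | h <;> rw [h] <;> norm_num
  have ha0 : 0 < a := by
    obtain ⟨i, hi, hik⟩ := hbwd (Fin.last d)
    rw [ha]
    exact Finset.sum_pos (fun i hi => hp' i (Finset.mem_filter.mp hi).1) ⟨i, Finset.mem_filter.mpr ⟨hi, hik⟩⟩
  have hb0 : 0 < b := ha0.trans hab
  obtain ⟨ρ, hρ⟩ : ∃ ρ, ρ = a / b := ⟨_, rfl⟩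
  have hρ0 : 0 < ρ := by rw [hρ]; positivity
  have hρ1 : ρ < 1 := by rw [hρ, div_lt_one hb0]; exact hab
  have haρ : a = b * ρ := by rw [hρ]; field_simp
  obtain ⟨r, hr⟩ : ∃ r, r = Real.sqrt ρ := ⟨_, rfl⟩
  have hr0 : 0 < r := by rw [hr]; exact Real.sqrt_pos.mpr hρ0
  have hr2 : ρ = r ^ 2 := by rw [hr, Real.sq_sqrt hρ0.le]
  have hr1 : r < 1 := by nlinarith
  have hρr : ρ ≤ r := by nlinarith
  obtain ⟨l, hl⟩ : ∃ l, l = 1 + b * (r - 1) + a * (r⁻¹ - 1) := ⟨_, rfl⟩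
  have hl' : l = 1 - b * (1 - r) ^ 2 := by rw [hl, haρ, hr2]; field_simp; ring
  have hl1 : l < 1 := by
    rw [hl']
    have : 0 < b * (1 - r) ^ 2 := mul_pos hb0 (pow_pos (by linarith) 2)
    linarith
  have h1 : ∀ z : ℤ, ∑ i ∈ S, p i * ρ ^ (z + i (Fin.last d) + 1) = ρ ^ (z + 1) := by
    intro z
    rw [zpow_harm S p hp1 hstep ρ hρ0 z, ← ha, ← hb]
    have : (1 + b * (ρ - 1) + a * (ρ⁻¹ - 1)) = 1 := by rw [haρ]; field_simp; ring
    rw [this, mul_one]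
  have h2 : ∀ z : ℤ, ∑ i ∈ S, p i * r ^ (z + i (Fin.last d) + 1) = l * r ^ (z + 1) := by
    intro z
    rw [zpow_harm S p hp1 hstep r hr0 z, ← ha, ← hb, ← hl, mul_comm]
  have hl0 : 0 ≤ l := by
    have h3 := h2 (-1)
    simp only [neg_add_cancel, zpow_zero, mul_one] at h3
    rw [← h3]
    exact Finset.sum_nonneg fun i hi => mul_nonneg (hp i hi) (by positivity)
  obtain ⟨C, hC0, hC⟩ := pointwise d (PP S p) hP0 hP1
  obtain ⟨G0, hG0, hG⟩ := geom_bound d l hl0 hl1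
  have hγ : ∀ k, ∃ G : ℝ, 0 ≤ G ∧ ∀ n : ℕ, 1 ≤ n → ((2 : ℝ) ^ (PP S p k / 2) * (1 - PP S p k / 2)) ^ n ≤ G * ((n : ℝ) ^ (-(d : ℝ) / 2) / n) := by
    intro k
    have := hP0 k
    have := hP1 k
    have hx : (2 : ℝ) ^ (PP S p k / 2) ≤ 1 + PP S p k / 2 := by
      have := rpow_one_add_le_one_add_mul_self (s := 1) (by norm_num) (p := PP S p k / 2) (by linarith) (by linarith)
      norm_num at this
      linarith
    apply geom_bound
    · apply mul_nonneg (by positivity); linarith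
    · calc _ ≤ (1 + PP S p k / 2) * (1 - PP S p k / 2) := mul_le_mul_of_nonneg_right hx (by linarith)
        _ < 1 := by nlinarith
  choose Gk hGk0 hGk using hγ
  set K := ∏ k, (Real.sqrt (Real.pi * PP S p k / 2))⁻¹ with hK
  have hK0 : 0 < K := Finset.prod_pos fun k _ => inv_pos.mpr (Real.sqrt_pos.mpr (by have := hP0 k; positivity))
  refine ⟨K * (G0 * r) + ∑ k, K / (2 * PP S p k) * ((1 - l)⁻¹ * r) + C + ∑ k, C / PP S p k + ∑ k, C * Gk k, ?_⟩
  intro n hn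
  have hn' : (1:ℝ) ≤ n := by exact_mod_cast hn
  have hn0 : (0:ℝ) < n := by linarith
  set N := (n : ℝ) ^ (-(d : ℝ) / 2) with hN
  have hN0 : 0 < N := by positivity
  have hN1 : N ≤ 1 := Real.rpow_le_one_of_one_le_of_nonpos hn' (by
    have : (0:ℝ) ≤ d := Nat.cast_nonneg d
    linarith)
  rw [walkWeight_eq, WF_eq S p hstep hsym]
  simp only [Pi.zero_apply]
  rw [← hρ]
  set F : (Fin d → ℕ) → ℝ := fun c => ∏ k, hh (c k) 0 with hF
  set ψ : (Fin d → ℕ) → ℝ := fun c => K * N * 1 + ∑ k, (-(K * N / (2 * n * PP S p k))) * ((c k : ℝ) - n * PP S p k) with hψ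
  set χ : (Fin d → ℕ) → ℝ := fun c => (C * N / n * 1 + ∑ k, (C * N / (n * PP S p k) ^ 2) * ((c k : ℝ) - n * PP S p k) ^ 2) +
      ∑ k, (C * ((2 : ℝ) ^ (PP S p k / 2)) ^ n) * (1 / 2 : ℝ) ^ (c k) with hχ
  have hpt : ∀ c, |F c - ψ c| ≤ χ c := by
    intro c
    have h3 := hC n hn c
    have e1 : ψ c = K * N * (1 - ∑ k, ((c k : ℝ) - n * PP S p k) / (n * PP S p k) / 2) := by
      simp only [hψ, mul_sub, Finset.mul_sum, sub_eq_add_neg (K * N * 1), ← Finset.sum_neg_distrib]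
      congr 1
      apply Finset.sum_congr rfl
      intro k _
      have := (hP0 k).ne'
      field_simp
      ring
    have e2 : χ c = C * N * (1 / n + ∑ k, (((c k : ℝ) - n * PP S p k) / (n * PP S p k)) ^ 2)
        + C * ∑ k, ((2 : ℝ) ^ (PP S p k / 2)) ^ n * (1 / 2 : ℝ) ^ (c k) := by
      simp only [hχ, mul_add, Finset.mul_sum]
      congr 2
      · ring
      · apply Finset.sum_congr rfl
        intro k _
        rw [div_pow]; ring
      · funext k; ring
    rw [e1, e2]
    exact h3
  have hT1 : |Tn S p n F 0 0 - Tn S p n ψ 0 0| ≤ Tn S p n χ 0 0 := by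
    have u1 := Tn_mono S p hp n F (fun c => ψ c + χ c) (fun c => by linarith [(abs_le.mp (hpt c)).2]) 0 0
    have u2 := Tn_mono S p hp n ψ (fun c => F c + χ c) (fun c => by linarith [(abs_le.mp (hpt c)).1]) 0 0
    rw [Tn_add S p n ψ χ] at u1
    rw [Tn_add S p n F χ] at u2
    rw [abs_le]; constructor <;> linarith
  have hq := Tn_surv S p hp hp1 hstep ρ r l hρ0 hρr hl0 h1 h2 n 0 0 (by norm_num)
  have hq1 := Tn_le_one S p hp hp1 n 0 0
  simp only [zero_add, zpow_one] at hq
  set q := Tn S p n (fun _ => 1) 0 0 with hqdef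
  have hL : ∀ k, |Tn S p n (fun c => (c k : ℝ) - n * PP S p k) 0 0| ≤ (1 - l)⁻¹ * r := by
    intro k
    have := Tn_lin S p hp hp1 hstep hP1 (fun k => (hP0 k).le) ρ r l hρ0 hρ1 hρr hl0 hl1 h1 h2
      (fun n z => Tn_le_one S p hp hp1 n 0 z) n k (n * PP S p k) 0 0 (by norm_num)
    simpa using this
  have hψT : Tn S p n ψ 0 0 = K * N * q + ∑ k, (-(K * N / (2 * n * PP S p k))) * Tn S p n (fun c => (c k : ℝ) - n * PP S p k) 0 0 := by
    rw [hψ, Tn_add, Tn_smul, Tn_sum]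
    congr 1
    apply Finset.sum_congr rfl
    intro k _
    rw [Tn_smul]
  have hχT : Tn S p n χ 0 0 ≤ C * (N / n) + ∑ k, C / PP S p k * (N / n) + ∑ k, C * Gk k * (N / n) := by
    rw [hχ, Tn_add, Tn_add, Tn_smul, Tn_sum, Tn_sum]
    refine add_le_add (add_le_add ?_ (Finset.sum_le_sum fun k _ => ?_)) (Finset.sum_le_sum fun k _ => ?_)
    · calc _ ≤ C * N / n * 1 := mul_le_mul_of_nonneg_left hq1 (by positivity)
        _ = _ := by ring
    · rw [Tn_smul]
      have h3 := Tn_sq S p hp hp1 hstep hP1 (fun k => (hP0 k).le) n k (n * PP S p k) 0 0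
      simp only [Pi.zero_apply, Nat.cast_zero, zero_add, sub_self] at h3
      have := hP0 k
      have h4 : Tn S p n (fun c => ((c k : ℝ) - n * PP S p k) ^ 2) 0 0 ≤ n * PP S p k := by
        have : 0 ≤ n * PP S p k * PP S p k := by positivity
        linarith
      calc _ ≤ C * N / (n * PP S p k) ^ 2 * (n * PP S p k) := by gcongr
        _ = _ := by field_simp
    · rw [Tn_smul]
      have h3 := Tn_exp S p hp hp1 hstep hP1 n k 0 0
      simp only [Pi.zero_apply, pow_zero, one_mul] at h3
      calc _ ≤ (C * ((2 : ℝ) ^ (PP S p k / 2)) ^ n) * (1 - PP S p k / 2) ^ n := by gcongr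
        _ = C * ((2 : ℝ) ^ (PP S p k / 2) * (1 - PP S p k / 2)) ^ n := by rw [mul_pow]; ring
        _ ≤ C * (Gk k * (N / n)) := by
          have := hGk k n hn
          gcongr
        _ = _ := by ring
  have hψd : |Tn S p n ψ 0 0 - N * (K * (1 - ρ))| ≤ K * (G0 * r) * (N / n) + ∑ k, K / (2 * PP S p k) * ((1 - l)⁻¹ * r) * (N / n) := by
    rw [hψT, show ∀ x, K * N * q + x - N * (K * (1 - ρ)) = K * N * (q - (1 - ρ)) + x by intro x; ring]
    refine (abs_add_le _ _).trans (add_le_add ?_ ((Finset.abs_sum_le_sum_abs _ _).trans (Finset.sum_le_sum fun k _ => ?_)))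
    · rw [abs_mul, abs_of_pos (by positivity : 0 < K * N), abs_of_nonneg (by linarith [hq.1])]
      have h5 : q - (1 - ρ) ≤ G0 * (N / n) * r := by
        have h6 := hG n hn
        have : l ^ n * r ≤ G0 * (N / n) * r := by gcongr
        linarith [hq.2]
      calc _ ≤ K * 1 * (G0 * (N / n) * r) := by
            apply mul_le_mul (by gcongr) h5 (by linarith [hq.1]) (by positivity)
        _ = _ := by ring
    · have := hP0 k
      rw [abs_mul, abs_neg, abs_of_pos (by positivity)]
      calc _ ≤ K * N / (2 * n * PP S p k) * ((1 - l)⁻¹ * r) := by gcongr; exact hL k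
        _ = _ := by field_simp
  have hfin : |Tn S p n F 0 0 - N * (K * (1 - ρ))| ≤ |Tn S p n F 0 0 - Tn S p n ψ 0 0| + |Tn S p n ψ 0 0 - N * (K * (1 - ρ))| :=
    abs_sub_le _ _ _
  refine hfin.trans ((add_le_add (hT1.trans hχT) hψd).trans (le_of_eq ?_))
  simp only [add_mul, Finset.sum_mul]
  ring

/-- Positive drift asymptotics (Melczer–Wilson) for a mostly symmetric step set in
dimension `d+1` (symmetric over the first `d` axes), with positive drift
`B(1) - A(1) > 0`:
`s_n = S(1)^n n^{-d/2} [ (S(1)/π)^{d/2} (B(1)-A(1))/(B(1) √(b_1⋯b_d)) + O(1/n) ]`. -/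
theorem mostly_symmetric_positive_drift_asymptotics
    (d : ℕ) (S : Finset (Fin (d + 1) → ℤ)) (w : (Fin (d + 1) → ℤ) → ℝ)
    (hstep : ∀ i ∈ S, (∀ j, i j = -1 ∨ i j = 0 ∨ i j = 1) ∧ i ≠ 0)
    (hw : ∀ i ∈ S, 0 < w i)
    (hsym : ∀ k : Fin d, SymmetricAxis (d + 1) S w (Fin.castSucc k))
    (hfwd : ∀ k : Fin (d + 1), ∃ i ∈ S, i k = 1)
    (hbwd : ∀ k : Fin (d + 1), ∃ i ∈ S, i k = -1)
    (hdrift : (∑ i ∈ S.filter fun i => i (Fin.last d) = -1, w i)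
        < ∑ i ∈ S.filter fun i => i (Fin.last d) = 1, w i) :
    ∃ C : ℝ, ∀ᶠ n : ℕ in atTop,
      |walkWeight (d + 1) S w n -
          (∑ i ∈ S, w i) ^ n * (n : ℝ) ^ (-(d : ℝ) / 2) *
            (((∑ i ∈ S, w i) / Real.pi) ^ ((d : ℝ) / 2) *
              ((∑ i ∈ S.filter fun i => i (Fin.last d) = 1, w i)
                  - ∑ i ∈ S.filter fun i => i (Fin.last d) = -1, w i) /
                ((∑ i ∈ S.filter fun i => i (Fin.last d) = 1, w i) *
                  Real.sqrt (∏ k : Fin d,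
                    ∑ i ∈ S.filter fun i => i (Fin.castSucc k) = 1, w i)))|
        ≤ C * (∑ i ∈ S, w i) ^ n * (n : ℝ) ^ (-(d : ℝ) / 2) / n := by
  have hstep' : ∀ i ∈ S, (∀ j, i j = -1 ∨ i j = 0 ∨ i j = 1) := fun i hi => (hstep i hi).1
  have hpi := Real.pi_pos
  obtain ⟨W, hW⟩ : ∃ W, W = ∑ i ∈ S, w i := ⟨_, rfl⟩
  have hW0 : 0 < W := by
    rw [hW]
    obtain ⟨i, hi, _⟩ := hfwd (Fin.last d)
    exact Finset.sum_pos hw ⟨i, hi⟩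
  rw [← hW]
  obtain ⟨A, hA⟩ : ∃ A, A = ∑ i ∈ S with i (Fin.last d) = -1, w i := ⟨_, rfl⟩
  obtain ⟨B, hB⟩ : ∃ B, B = ∑ i ∈ S with i (Fin.last d) = 1, w i := ⟨_, rfl⟩
  rw [← hA, ← hB] at hdrift ⊢
  have hA0 : 0 ≤ A := by
    rw [hA]
    exact Finset.sum_nonneg fun i hi => (hw i (Finset.mem_filter.mp hi).1).le
  have hB0 : 0 < B := lt_of_le_of_lt hA0 hdrift
  obtain ⟨p, hp⟩ : ∃ p : (Fin (d + 1) → ℤ) → ℝ, p = fun i => W⁻¹ * w i := ⟨_, rfl⟩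
  have hwp : w = fun i => W * p i := by
    funext i; rw [hp]; field_simp
  have hpS : ∀ T : Finset (Fin (d + 1) → ℤ), ∑ i ∈ T, p i = W⁻¹ * ∑ i ∈ T, w i := by
    intro T; rw [hp, Finset.mul_sum]
  have hsym' : ∀ k : Fin d, SymmetricAxis (d + 1) S p (Fin.castSucc k) := by
    intro k i hi
    refine ⟨(hsym k i hi).1, ?_⟩
    rw [hp]
    simp only [(hsym k i hi).2]
  obtain ⟨C, hC⟩ := core S p hstep' (fun i hi => by rw [hp]; exact mul_pos (inv_pos.mpr hW0) (hw i hi))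
    (by rw [hpS, ← hW, inv_mul_cancel₀ hW0.ne']) hsym' hfwd hbwd (W⁻¹ * A) (W⁻¹ * B)
    (by rw [hpS, hA]) (by rw [hpS, hB]) (by gcongr)
  refine ⟨C, ?_⟩
  filter_upwards [eventually_ge_atTop 1] with n hn
  have h := hC n hn
  have e1 : walkWeight (d + 1) S w n = W ^ n * walkWeight (d + 1) S p n := by
    conv_lhs => rw [hwp]
    exact walkWeight_scale S p W n
  have e2 : (W / Real.pi) ^ ((d : ℝ) / 2) * (B - A) /
                (B * Real.sqrt (∏ k : Fin d, ∑ i ∈ S.filter fun i => i (Fin.castSucc k) = 1, w i))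
      = (∏ k, (Real.sqrt (Real.pi * PP S p k / 2))⁻¹) * (1 - (W⁻¹ * A) / (W⁻¹ * B)) := by
    have f0 : ∀ k : Fin d, 0 < ∑ i ∈ S with i (Fin.castSucc k) = 1, w i := by
      intro k
      obtain ⟨i, hi, hik⟩ := hfwd (Fin.castSucc k)
      exact Finset.sum_pos (fun i hi => hw i (Finset.mem_filter.mp hi).1) ⟨i, Finset.mem_filter.mpr ⟨hi, hik⟩⟩
    have f1 : ∀ k : Fin d, (Real.sqrt (Real.pi * PP S p k / 2))⁻¹ =
        Real.sqrt (W / Real.pi) * (Real.sqrt (∑ i ∈ S with i (Fin.castSucc k) = 1, w i))⁻¹ := by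
      intro k
      rw [PP_eq S p hstep' hsym' k, hpS, ← Real.sqrt_inv, ← Real.sqrt_inv, ← Real.sqrt_mul (by positivity)]
      congr 1
      have := (f0 k).ne'
      field_simp
    have f2 : Real.sqrt (∏ k : Fin d, ∑ i ∈ S with i (Fin.castSucc k) = 1, w i) =
        ∏ k : Fin d, Real.sqrt (∑ i ∈ S with i (Fin.castSucc k) = 1, w i) :=
      Real.sqrt_prod _ (fun k _ => (f0 k).le)
    have f3 : (W / Real.pi) ^ ((d : ℝ) / 2) = Real.sqrt (W / Real.pi) ^ d := by
      rw [Real.sqrt_eq_rpow, ← Real.rpow_natCast, ← Real.rpow_mul (by positivity)]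
      congr 1; ring
    rw [f2, f3]
    simp only [f1, Finset.prod_mul_distrib, Finset.prod_const, Finset.card_univ, Fintype.card_fin, Finset.prod_inv_distrib]
    have f4 : (∏ k : Fin d, Real.sqrt (∑ i ∈ S with i (Fin.castSucc k) = 1, w i)) ≠ 0 :=
      Finset.prod_ne_zero_iff.mpr fun k _ => (Real.sqrt_pos.mpr (f0 k)).ne'
    field_simp
  rw [e1, e2, mul_assoc (W ^ n), ← mul_sub, abs_mul, abs_of_pos (pow_pos hW0 n)]
  calc _ ≤ W ^ n * (C * ((n : ℝ) ^ (-(d : ℝ) / 2) / n)) := by gcongr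
    _ = _ := by ring

end
end
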